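/- If C is a permutation class containing only finitely many simple permutations, then for any finite set B₁ of blocked permutations and any finite set B₂ of barred permutations, the generating function of the set of permutations in C that avoid every element of B₁ and every element of B₂ is algebraic over ℚ[x]. -/

import Mathlib

/-- A permutation of length `n`. -/
abbrev Perm (n : ℕ) := Equiv.Perm (Fin n)

/-- `σ` is contained in `π`: there is a strictly increasing sequence of indices of `π`
on which `π` is order isomorphic to `σ`. -/
def Contains {m n : ℕ} (σ : Perm m) (π : Perm n) : Prop :=
  ∃ f : Fin m → Fin n, StrictMono f ∧ ∀ s t : Fin m, π (f s) < π (f t) ↔ σ s < σ t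

/-- A permutation class: a downset in the containment order. -/
def IsPermClass (C : ∀ n, Set (Perm n)) : Prop :=
  ∀ ⦃m n : ℕ⦄ (σ : Perm m) (π : Perm n), π ∈ C n → Contains σ π → σ ∈ C m

/-- A set of contiguous values. -/
def IsRange {n : ℕ} (I : Finset (Fin n)) : Prop :=
  ∀ ⦃i j l : Fin n⦄, i ∈ I → l ∈ I → i ≤ j → j ≤ l → j ∈ I

/-- An interval of `π`: a set of contiguous indices mapped to a set of contiguous values. -/
def IsPermInterval {n : ℕ} (π : Perm n) (I : Finset (Fin n)) : Prop :=
  IsRange I ∧ IsRange (I.image π)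

/-- A permutation is simple if its only intervals have size `0`, `1`, or `n`. -/
def IsSimple {n : ℕ} (π : Perm n) : Prop :=
  ∀ I : Finset (Fin n), IsPermInterval π I → I.card ≤ 1 ∨ I.card = n

/-- The set of simple permutations belonging to the class `C` is finite. -/
def FinitelyManySimples (C : ∀ n, Set (Perm n)) : Prop :=
  {p : Σ n : ℕ, Perm n | p.2 ∈ C p.1 ∧ IsSimple p.2}.Finite

/-- The generating function `∑_{n ≥ 1} |S_n| xⁿ` of a set of permutations. -/
noncomputable def genFun (S : ∀ n, Set (Perm n)) : PowerSeries ℚ :=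
  PowerSeries.mk fun n => if n = 0 then 0 else (Nat.card (S n) : ℚ)

/-- A power series `f` is algebraic over `ℚ[x]` if there is a nonzero polynomial
`P(x,y) ∈ ℚ[x][y]` with `P(x,f) = 0`. -/
def IsAlgebraicOverQx (f : PowerSeries ℚ) : Prop :=
  ∃ P : Polynomial (Polynomial ℚ), P ≠ 0 ∧
    Polynomial.eval₂ Polynomial.coeToPowerSeries.ringHom f P = 0

/-- `π` contains the blocked permutation `(σ, D)`:  a copy of `σ` in `π` in which, for
each `s ∈ D` (`1`-based, with `1 ≤ s ≤ k-1`), the `s`-th and `(s+1)`-st chosen indices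
are adjacent.  (Indices of `f` are `0`-based, so the constraint for `s ∈ D` relates the
chosen indices numbered `s - 1` and `s`.) -/
def ContainsBlocked {n k : ℕ} (π : Perm n) (σ : Perm k) (D : Set ℕ) : Prop :=
  ∃ f : Fin k → Fin n, StrictMono f ∧ (∀ s t : Fin k, π (f s) < π (f t) ↔ σ s < σ t) ∧
    ∀ (s : ℕ) (_ : s ∈ D) (h1 : 1 ≤ s) (h2 : s < k),
      (f ⟨s, h2⟩ : ℕ) = (f ⟨s - 1, by omega⟩ : ℕ) + 1

/-- `π` avoids the barred permutation `(σ, S)` (`S` is the set of barred positions):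
every copy in `π` of the pattern of `σ` on the unbarred positions extends to a copy
of `σ` itself. -/
def AvoidsBarred {n k : ℕ} (π : Perm n) (σ : Perm k) (S : Set (Fin k)) : Prop :=
  ∀ e : {s : Fin k // s ∉ S} → Fin n, StrictMono e →
    (∀ s t : {s : Fin k // s ∉ S}, π (e s) < π (e t) ↔ σ s.1 < σ t.1) →
    ∃ f : Fin k → Fin n, StrictMono f ∧ (∀ s t : Fin k, π (f s) < π (f t) ↔ σ s < σ t) ∧
      ∀ s : {s : Fin k // s ∉ S}, f s.1 = e s

theorem Derivation.map_finset_prod {K E M ι : Type*} [CommSemiring K] [CommSemiring E] [Algebra K E]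
    [AddCommMonoid M] [Module K M] [Module E M] [DecidableEq ι]
    (D : Derivation K E M) (s : Finset ι) (f : ι → E) :
    D (∏ i ∈ s, f i) = ∑ i ∈ s, (∏ j ∈ s.erase i, f j) • D (f i) := by
  induction s using Finset.induction_on with
  | empty => simp
  | insert a s ha ih =>
    rw [Finset.prod_insert ha, D.leibniz, ih, Finset.sum_insert ha, Finset.erase_insert ha,
      Finset.smul_sum, add_comm]
    congr 1
    refine Finset.sum_congr rfl fun i hi => ?_
    have hne : a ≠ i := fun h => ha (h ▸ hi)
    rw [Finset.erase_insert_of_ne hne, Finset.prod_insert (fun h => ha (Finset.mem_of_mem_erase h)),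
      smul_smul]

/-- The Jacobian of a polynomial system `y t = p t + ∑ γ, ∏ i, y (c t γ i)`. -/
def sysJacobian {E ι : Type*} [CommRing E] [DecidableEq ι] {Γ : ι → Type} [∀ t, Fintype (Γ t)]
    {m : ∀ t, Γ t → ℕ} (c : ∀ t (γ : Γ t), Fin (m t γ) → ι) (y : ι → E) : Matrix ι ι E :=
  fun t s => ∑ γ, ∑ i, if c t γ i = s then ∏ j ∈ Finset.univ.erase i, y (c t γ j) else 0

theorem sysJacobian_map {E E' ι : Type*} [CommRing E] [CommRing E'] [DecidableEq ι] {Γ : ι → Type}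
    [∀ t, Fintype (Γ t)] {m : ∀ t, Γ t → ℕ} (c : ∀ t (γ : Γ t), Fin (m t γ) → ι) (y : ι → E)
    (φ : E →+* E') :
    (sysJacobian c y).map φ = sysJacobian c (fun t => φ (y t)) := by
  ext t s
  simp only [Matrix.map_apply, sysJacobian, map_sum]
  refine Finset.sum_congr rfl fun γ _ => Finset.sum_congr rfl fun i _ => ?_
  split_ifs <;> simp

theorem det_one_sub_map {E E' ι : Type*} [CommRing E] [CommRing E'] [DecidableEq ι] [Fintype ι]
    (M : Matrix ι ι E) (φ : E →+* E') :
    (1 - M.map φ).det = φ (1 - M).det := by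
  rw [RingHom.map_det, map_sub, map_one]; rfl

theorem derivation_eq_zero_of_system {K E ι : Type*} [Field K] [Field E] [Algebra K E]
    [DecidableEq ι] [Fintype ι] {Γ : ι → Type} [∀ t, Fintype (Γ t)]
    {m : ∀ t, Γ t → ℕ} (c : ∀ t (γ : Γ t), Fin (m t γ) → ι) (p : ι → K) (y : ι → E)
    (hy : ∀ t, y t = algebraMap K E (p t) + ∑ γ, ∏ i, y (c t γ i))
    (hdet : (1 - sysJacobian c y).det ≠ 0) (D : Derivation K E E) (t : ι) : D (y t) = 0 := by
  suffices h : (fun t => D (y t)) = 0 from congrFun h t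
  refine Matrix.eq_zero_of_mulVec_eq_zero hdet ?_
  rw [Matrix.sub_mulVec, Matrix.one_mulVec, sub_eq_zero]
  ext t
  conv_lhs => rw [hy t]
  simp only [map_add, Derivation.map_algebraMap, zero_add, map_sum, Derivation.map_finset_prod,
    Matrix.mulVec, dotProduct, sysJacobian, Finset.sum_mul]
  rw [Finset.sum_comm]
  refine Finset.sum_congr rfl fun γ _ => ?_
  rw [Finset.sum_comm]
  refine Finset.sum_congr rfl fun i _ => ?_
  simp

theorem isAlgebraic_of_system {K E ι : Type*} [Field K] [CharZero K] [Field E] [Algebra K E]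
    [DecidableEq ι] [Fintype ι] {Γ : ι → Type} [∀ t, Fintype (Γ t)]
    {m : ∀ t, Γ t → ℕ} (c : ∀ t (γ : Γ t), Fin (m t γ) → ι) (p : ι → K) (y : ι → E)
    (hy : ∀ t, y t = algebraMap K E (p t) + ∑ γ, ∏ i, y (c t γ i))
    (hdet : (1 - sysJacobian c y).det ≠ 0) (t : ι) : IsAlgebraic K (y t) := by
  let L := IntermediateField.adjoin K (Set.range y)
  have hmem : ∀ t, y t ∈ L := fun t => IntermediateField.subset_adjoin K _ ⟨t, rfl⟩
  let z : ι → L := fun t => ⟨y t, hmem t⟩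
  have hz : ∀ t, z t = algebraMap K L (p t) + ∑ γ, ∏ i, z (c t γ i) := by
    intro t
    apply (algebraMap L E).injective
    simpa [z] using hy t
  have hdet' : (1 - sysJacobian c z).det ≠ 0 := by
    intro h0
    apply hdet
    have := det_one_sub_map (sysJacobian c z) (algebraMap L E)
    rw [sysJacobian_map, h0, map_zero] at this
    exact this
  have hD : ∀ D : Derivation K L L, ∀ x : L, D x = 0 := by
    intro D x
    obtain ⟨x, hx⟩ := x
    induction hx using IntermediateField.adjoin_induction with
    | mem x hx => obtain ⟨t, rfl⟩ := hx; exact derivation_eq_zero_of_system c p z hz hdet' D t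
    | algebraMap x => exact D.map_algebraMap x
    | add x y hx hy h1 h2 =>
      have : (⟨x + y, add_mem hx hy⟩ : L) = ⟨x, hx⟩ + ⟨y, hy⟩ := rfl
      rw [this, map_add, h1, h2, add_zero]
    | mul x y hx hy h1 h2 =>
      have : (⟨x * y, mul_mem hx hy⟩ : L) = ⟨x, hx⟩ * ⟨y, hy⟩ := rfl
      rw [this, D.leibniz, h1, h2]; simp
    | inv x hx h =>
      have : (⟨x⁻¹, inv_mem hx⟩ : L) = (⟨x, hx⟩ : L)⁻¹ := rfl
      rw [this, D.leibniz_inv, h, smul_zero]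
  have hsub : Subsingleton (Ω[L⁄K]) := by
    refine ⟨fun a b => ?_⟩
    rw [← sub_eq_zero, ← Module.forall_dual_apply_eq_zero_iff L]
    intro φ
    have : φ = 0 := by
      apply (KaehlerDifferential.linearMapEquivDerivation K L).injective
      ext x
      rw [hD, hD]
    rw [this]; rfl
  have hunr : Algebra.FormallyUnramified K L := ⟨hsub⟩
  have hess : Algebra.EssFiniteType K L := by
    apply IntermediateField.essFiniteType_iff.2
    exact IntermediateField.fg_adjoin_of_finite (Set.finite_range y)
  have hsep := (Algebra.FormallyUnramified.iff_isSeparable K L).1 hunr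
  have := (Algebra.IsSeparable.isAlgebraic K L).isAlgebraic (z t)
  exact this.algHom L.val

open Polynomial PowerSeries in
theorem powerSeries_isAlgebraic_of_system {ι : Type*}
    [DecidableEq ι] [Fintype ι] {Γ : ι → Type} [∀ t, Fintype (Γ t)]
    {m : ∀ t, Γ t → ℕ} (hm : ∀ t γ, 2 ≤ m t γ) (c : ∀ t (γ : Γ t), Fin (m t γ) → ι)
    (p : ι → ℚ[X]) (y : ι → ℚ⟦X⟧) (hy0 : ∀ t, constantCoeff (y t) = 0)
    (hy : ∀ t, y t = (p t : ℚ⟦X⟧) + ∑ γ, ∏ i, y (c t γ i)) (t : ι) :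
    IsAlgebraic ℚ[X] (y t) := by
  have hJ : (sysJacobian c y).map constantCoeff = 0 := by
    rw [sysJacobian_map]
    ext t s
    simp only [sysJacobian, hy0, Matrix.zero_apply, Finset.prod_const]
    refine Finset.sum_eq_zero fun γ _ => Finset.sum_eq_zero fun i _ => ?_
    have := hm t γ
    rw [zero_pow, ite_self]
    simp only [Finset.mem_univ, Finset.card_erase_of_mem, Finset.card_univ, Fintype.card_fin]
    omega
  have hdet : (1 - sysJacobian c y).det ≠ 0 := by
    intro h0
    have := det_one_sub_map (sysJacobian c y) constantCoeff
    rw [hJ, h0] at this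
    simp at this
  let φ : ℚ⟦X⟧ →+* LaurentSeries ℚ := algebraMap _ _
  have hφ : Function.Injective φ := FaithfulSMul.algebraMap_injective _ _
  have hdet' : (1 - sysJacobian c (fun t => φ (y t))).det ≠ 0 := by
    rw [← sysJacobian_map, det_one_sub_map]
    exact fun h => hdet (hφ (by rw [h, map_zero]))
  let : Algebra (FractionRing ℚ[X]) (LaurentSeries ℚ) := FractionRing.liftAlgebra ℚ[X] _
  have := FractionRing.isScalarTower_liftAlgebra ℚ[X] (LaurentSeries ℚ)
  have key := isAlgebraic_of_system (K := FractionRing ℚ[X]) (E := LaurentSeries ℚ) c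
    (fun t => algebraMap ℚ[X] _ (p t)) (fun t => φ (y t)) (fun t => by
      rw [← IsScalarTower.algebraMap_apply, hy t]
      simp only [map_add, map_sum, map_prod]
      rfl) hdet' t
  rw [← IsFractionRing.isAlgebraic_iff ℚ[X] (FractionRing ℚ[X])] at key
  obtain ⟨P, hP, hP0⟩ := key
  refine ⟨P, hP, hφ ?_⟩
  rw [map_zero, ← hP0]
  rw [Polynomial.aeval_def, Polynomial.aeval_def, Polynomial.hom_eval₂]
  rfl

/-- The generating function of a type of objects with a size. -/
noncomputable def sizeGF {X : Type*} (s : X → ℕ) : PowerSeries ℚ :=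
  PowerSeries.mk fun n => (Nat.card {x // s x = n} : ℚ)

theorem sizeGF_congr {X Y : Type*} {s : X → ℕ} {s' : Y → ℕ} (f : X → Y)
    (hf : Function.Bijective f) (hs : ∀ x, s' (f x) = s x) : sizeGF s = sizeGF s' := by
  ext n
  simp only [sizeGF, PowerSeries.coeff_mk]
  congr 1
  exact Nat.card_congr ((Equiv.ofBijective f hf).subtypeEquiv fun x => by simp [hs])

theorem sizeGF_sigma {I : Type*} [Fintype I] {X : I → Type*} (s : ∀ i, X i → ℕ)
    (hs : ∀ i n, Finite {x // s i x = n}) :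
    sizeGF (fun x : Σ i, X i => s x.1 x.2) = ∑ i, sizeGF (s i) := by
  ext n
  simp only [sizeGF, map_sum, PowerSeries.coeff_mk]
  rw [← Nat.cast_sum, ← Nat.card_sigma]
  congr 1
  exact Nat.card_congr
    { toFun := fun x => ⟨x.1.1, x.1.2, x.2⟩
      invFun := fun x => ⟨⟨x.1, x.2.1⟩, x.2.2⟩
      left_inv := fun _ => rfl
      right_inv := fun _ => rfl }

theorem sizeGF_sum {X Y : Type*} (s : X → ℕ) (s' : Y → ℕ)
    (hs : ∀ n, Finite {x // s x = n}) (hs' : ∀ n, Finite {x // s' x = n}) :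
    sizeGF (Sum.elim s s') = sizeGF s + sizeGF s' := by
  ext n
  simp only [sizeGF, map_add, PowerSeries.coeff_mk]
  rw [← Nat.cast_add, ← Nat.card_sum]
  congr 1
  exact Nat.card_congr (Equiv.subtypeSum)

/-- Pairs of total size `n`, sorted by the two sizes. -/
def prodSizeEquiv {X Y : Type*} (s : X → ℕ) (s' : Y → ℕ) (n : ℕ) :
    {x : X × Y // s x.1 + s' x.2 = n} ≃
      Σ p : Finset.HasAntidiagonal.antidiagonal n, {x // s x = p.1.1} × {y // s' y = p.1.2} where
  toFun x := ⟨⟨(s x.1.1, s' x.1.2), by simp [x.2]⟩, ⟨x.1.1, rfl⟩, ⟨x.1.2, rfl⟩⟩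
  invFun x := ⟨(x.2.1.1, x.2.2.1), by
    rw [x.2.1.2, x.2.2.2]; exact Finset.HasAntidiagonal.mem_antidiagonal.1 x.1.2⟩
  left_inv _ := rfl
  right_inv := by
    rintro ⟨⟨⟨a, b⟩, h⟩, ⟨x, hx⟩, ⟨y, hy⟩⟩
    dsimp only at hx hy
    subst hx hy
    rfl

theorem sizeGF_prod {X Y : Type*} (s : X → ℕ) (s' : Y → ℕ)
    (hs : ∀ n, Finite {x // s x = n}) (hs' : ∀ n, Finite {x // s' x = n}) :
    sizeGF (fun x : X × Y => s x.1 + s' x.2) = sizeGF s * sizeGF s' := by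
  ext n
  rw [PowerSeries.coeff_mul]
  simp only [sizeGF, PowerSeries.coeff_mk]
  rw [Nat.card_congr (prodSizeEquiv s s' n), Nat.card_sigma]
  push_cast [Nat.card_prod]
  exact Finset.sum_coe_sort (Finset.HasAntidiagonal.antidiagonal n)
    (fun p => (Nat.card {x // s x = p.1} : ℚ) * Nat.card {y // s' y = p.2})

theorem finite_pi_size {m : ℕ} {X : Fin m → Type*} (s : ∀ i, X i → ℕ)
    (hs : ∀ i n, Finite {x // s i x = n}) (n : ℕ) :
    Finite {x : ∀ i, X i // ∑ i, s i (x i) = n} := by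
  have : ∀ i, Finite {x // s i x ≤ n} := fun i => by
    refine Set.Finite.subset (s := ⋃ k ∈ Set.Iic n, {x | s i x = k})
      ((Set.finite_Iic n).biUnion fun k _ => hs i k) ?_
    intro x hx
    simp only [Set.mem_iUnion]
    exact ⟨s i x, hx, rfl⟩
  refine Finite.of_injective (β := ∀ i, {x // s i x ≤ n})
    (fun x i => ⟨x.1 i, ?_⟩) ?_
  · refine le_of_le_of_eq ?_ x.2
    exact Finset.single_le_sum (f := fun i => s i (x.1 i)) (fun _ _ => Nat.zero_le _)
      (Finset.mem_univ i)
  · intro x y h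
    ext i
    exact congrArg Subtype.val (congrFun h i)

theorem sizeGF_pi {m : ℕ} {X : Fin m → Type*} (s : ∀ i, X i → ℕ)
    (hs : ∀ i n, Finite {x // s i x = n}) :
    sizeGF (fun x : ∀ i, X i => ∑ i, s i (x i)) = ∏ i, sizeGF (s i) := by
  induction m with
  | zero =>
    ext n
    simp only [sizeGF, Finset.univ_eq_empty, Finset.sum_empty, Finset.prod_empty,
      PowerSeries.coeff_mk, PowerSeries.coeff_one]
    split_ifs with h
    · subst h
      simp
    · have : IsEmpty {x : ∀ i, X i // 0 = n} := ⟨fun x => h x.2.symm⟩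
      simp
  | succ m ih =>
    rw [Fin.prod_univ_succ, ← ih (fun i => s i.succ) (fun i => hs i.succ),
      ← sizeGF_prod _ _ (hs 0) (finite_pi_size _ fun i => hs i.succ)]
    refine sizeGF_congr (Fin.consEquiv X).symm (Equiv.bijective _) fun x => ?_
    rw [Fin.sum_univ_succ]
    rfl

/-- Permutations of arbitrary length. -/
abbrev SPerm := Σ n : ℕ, Perm n

/-- The set `R` of pairs is a partial isomorphism between two permutations, seen as sets with
two linear orders. -/
def IsPartialIso (p p' : SPerm) (R : Set (Fin p.1 × Fin p'.1)) : Prop :=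
  ∀ x ∈ R, ∀ y ∈ R, (x.1 < y.1 ↔ x.2 < y.2) ∧ (p.2 x.1 < p.2 y.1 ↔ p'.2 x.2 < p'.2 y.2)

/-- Duplicator wins the `q`-round Ehrenfeucht–Fraïssé game on two permutations from the
position `R`. -/
def EFEquiv (p p' : SPerm) : ℕ → Set (Fin p.1 × Fin p'.1) → Prop
  | 0, R => IsPartialIso p p' R
  | q + 1, R => IsPartialIso p p' R ∧ (∀ a, ∃ a', EFEquiv p p' q (insert (a, a') R)) ∧
      ∀ a', ∃ a, EFEquiv p p' q (insert (a, a') R)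

theorem IsPartialIso.mono {p p' : SPerm} {R R' : Set (Fin p.1 × Fin p'.1)} (h : R ⊆ R')
    (H : IsPartialIso p p' R') : IsPartialIso p p' R :=
  fun x hx y hy => H x (h hx) y (h hy)

theorem EFEquiv.isPartialIso {p p' : SPerm} {q : ℕ} {R : Set (Fin p.1 × Fin p'.1)}
    (H : EFEquiv p p' q R) : IsPartialIso p p' R := by
  cases q with
  | zero => exact H
  | succ q => exact H.1

theorem EFEquiv.mono {p p' : SPerm} {q : ℕ} {R R' : Set (Fin p.1 × Fin p'.1)} (h : R ⊆ R')
    (H : EFEquiv p p' q R') : EFEquiv p p' q R := by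
  induction q generalizing R R' with
  | zero => exact IsPartialIso.mono h H
  | succ q ih =>
    refine ⟨H.1.mono h, fun a => ?_, fun a' => ?_⟩
    · obtain ⟨a', ha⟩ := H.2.1 a
      exact ⟨a', ih (Set.insert_subset_insert h) ha⟩
    · obtain ⟨a, ha⟩ := H.2.2 a'
      exact ⟨a, ih (Set.insert_subset_insert h) ha⟩

theorem EFEquiv.of_le {p p' : SPerm} {q r : ℕ} (hqr : q ≤ r) {R : Set (Fin p.1 × Fin p'.1)}
    (H : EFEquiv p p' r R) : EFEquiv p p' q R := by
  induction q generalizing R r with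
  | zero => exact H.isPartialIso
  | succ q ih =>
    obtain ⟨r, rfl⟩ : ∃ s, r = s + 1 := ⟨r - 1, by omega⟩
    refine ⟨H.1, fun a => ?_, fun a' => ?_⟩
    · obtain ⟨a', ha⟩ := H.2.1 a
      exact ⟨a', ih (by omega) ha⟩
    · obtain ⟨a, ha⟩ := H.2.2 a'
      exact ⟨a, ih (by omega) ha⟩

/-- Rank `q` types of `k`-tuples in permutations. -/
def QType : ℕ → ℕ → Type
  | 0, k => Fin k → Fin k → Prop × Prop
  | q + 1, k => (Fin k → Fin k → Prop × Prop) × Set (QType q (k + 1))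

theorem QType.finite (q k : ℕ) : Finite (QType q k) := by
  induction q generalizing k with
  | zero => unfold QType; infer_instance
  | succ q ih =>
    have := ih (k + 1)
    unfold QType
    infer_instance

/-- The atomic type of a tuple. -/
def atomType (p : SPerm) {k : ℕ} (a : Fin k → Fin p.1) : Fin k → Fin k → Prop × Prop :=
  fun i j => (a i < a j, p.2 (a i) < p.2 (a j))

/-- The rank `q` type of a tuple. -/
def qtype (p : SPerm) : ∀ (q : ℕ) {k : ℕ}, (Fin k → Fin p.1) → QType q k
  | 0, _, a => atomType p a
  | q + 1, _, a => (atomType p a, Set.range fun b => qtype p q (Fin.cons b a))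

theorem atomType_eq_iff {p p' : SPerm} {k : ℕ} (a : Fin k → Fin p.1) (a' : Fin k → Fin p'.1) :
    atomType p a = atomType p' a' ↔ IsPartialIso p p' (Set.range fun i => (a i, a' i)) := by
  simp only [atomType, funext_iff, Prod.mk.injEq, IsPartialIso, Set.forall_mem_range, eq_iff_iff]

theorem range_cons_pair {p p' : SPerm} {k : ℕ} (a : Fin k → Fin p.1) (a' : Fin k → Fin p'.1)
    (b : Fin p.1) (b' : Fin p'.1) :
    (Set.range fun i : Fin (k + 1) => ((Fin.cons b a : Fin (k + 1) → Fin p.1) i,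
      (Fin.cons b' a' : Fin (k + 1) → Fin p'.1) i)) =
      insert (b, b') (Set.range fun i => (a i, a' i)) := by
  ext x
  simp only [Set.mem_range, Fin.exists_fin_succ, Fin.cons_zero, Fin.cons_succ, Set.mem_insert_iff,
    eq_comm]

theorem qtype_eq_iff {p p' : SPerm} (q : ℕ) {k : ℕ} (a : Fin k → Fin p.1)
    (a' : Fin k → Fin p'.1) :
    qtype p q a = qtype p' q a' ↔ EFEquiv p p' q (Set.range fun i => (a i, a' i)) := by
  induction q generalizing k with
  | zero => exact atomType_eq_iff a a'
  | succ q ih =>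
    refine Prod.mk_inj.trans (and_congr (atomType_eq_iff a a') ?_)
    simp only [← range_cons_pair, ← ih]
    constructor
    · intro h
      refine ⟨fun b => ?_, fun b' => ?_⟩
      · obtain ⟨b', hb⟩ := h.subset ⟨b, rfl⟩
        exact ⟨b', hb.symm⟩
      · exact h.symm.subset ⟨b', rfl⟩
    · rintro ⟨h1, h2⟩
      refine Set.Subset.antisymm ?_ ?_
      · rintro _ ⟨b, rfl⟩
        obtain ⟨b', hb⟩ := h1 b
        exact ⟨b', hb.symm⟩
      · rintro _ ⟨b', rfl⟩
        exact h2 b'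

/-- The rank `q` type of a permutation. -/
def permType (q : ℕ) (p : SPerm) : QType q 0 := qtype p q Fin.elim0

theorem permType_eq_iff {q : ℕ} {p p' : SPerm} :
    permType q p = permType q p' ↔ EFEquiv p p' q ∅ := by
  rw [permType, permType, qtype_eq_iff, Set.range_eq_empty]

theorem permType_eq_of_le {q r : ℕ} (hqr : q ≤ r) {p p' : SPerm}
    (h : permType r p = permType r p') : permType q p = permType q p' :=
  permType_eq_iff.2 ((permType_eq_iff.1 h).of_le hqr)

/-- The permutation `p` is the inflation of `σ` by the permutations `α`. -/
def IsInflation (σ : SPerm) (α : Fin σ.1 → SPerm) (p : SPerm) : Prop :=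
  ∃ e : (Σ i, Fin (α i).1) ≃ Fin p.1, ∀ x y,
    (e x < e y ↔ x.1 < y.1 ∨ x.1 = y.1 ∧ (x.2 : ℕ) < y.2) ∧
    (p.2 (e x) < p.2 (e y) ↔ σ.2 x.1 < σ.2 y.1 ∨
      x.1 = y.1 ∧ ((α x.1).2 x.2 : ℕ) < (α y.1).2 y.2)

/-- The game position on inflations made from positions on the parts. -/
def sigmaRel {m : ℕ} {α α' : Fin m → SPerm} {p p' : SPerm} (e : (Σ i, Fin (α i).1) ≃ Fin p.1)
    (e' : (Σ i, Fin (α' i).1) ≃ Fin p'.1) (R : ∀ i, Set (Fin (α i).1 × Fin (α' i).1)) :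
    Set (Fin p.1 × Fin p'.1) :=
  {x | ∃ i a a', (a, a') ∈ R i ∧ x = (e ⟨i, a⟩, e' ⟨i, a'⟩)}

theorem sigmaRel_update {m : ℕ} {α α' : Fin m → SPerm} {p p' : SPerm}
    (e : (Σ i, Fin (α i).1) ≃ Fin p.1)
    (e' : (Σ i, Fin (α' i).1) ≃ Fin p'.1) (R : ∀ i, Set (Fin (α i).1 × Fin (α' i).1))
    (i : Fin m) (a : Fin (α i).1) (a' : Fin (α' i).1) :
    sigmaRel e e' (Function.update R i (insert (a, a') (R i))) =
      insert (e ⟨i, a⟩, e' ⟨i, a'⟩) (sigmaRel e e' R) := by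
  ext x
  simp only [sigmaRel, Set.mem_insert_iff, Set.mem_ofPred_eq]
  constructor
  · rintro ⟨j, b, b', hb, rfl⟩
    by_cases hj : j = i
    · subst hj
      rw [Function.update_self] at hb
      rcases hb with hb | hb
      · left
        obtain ⟨rfl, rfl⟩ := Prod.mk.inj hb
        rfl
      · exact Or.inr ⟨_, _, _, hb, rfl⟩
    · rw [Function.update_of_ne hj] at hb
      exact Or.inr ⟨_, _, _, hb, rfl⟩
  · rintro (rfl | ⟨j, b, b', hb, rfl⟩)
    · exact ⟨i, a, a', by rw [Function.update_self]; exact Or.inl rfl, rfl⟩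
    · refine ⟨j, b, b', ?_, rfl⟩
      by_cases hj : j = i
      · subst hj
        rw [Function.update_self]
        exact Or.inr hb
      · rwa [Function.update_of_ne hj]

theorem efEquiv_sigmaRel {σ : SPerm} {α α' : Fin σ.1 → SPerm} {p p' : SPerm}
    {e : (Σ i, Fin (α i).1) ≃ Fin p.1} {e' : (Σ i, Fin (α' i).1) ≃ Fin p'.1}
    (he : ∀ x y,
    (e x < e y ↔ x.1 < y.1 ∨ x.1 = y.1 ∧ (x.2 : ℕ) < y.2) ∧
    (p.2 (e x) < p.2 (e y) ↔ σ.2 x.1 < σ.2 y.1 ∨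
      x.1 = y.1 ∧ ((α x.1).2 x.2 : ℕ) < (α y.1).2 y.2))
    (he' : ∀ x y,
    (e' x < e' y ↔ x.1 < y.1 ∨ x.1 = y.1 ∧ (x.2 : ℕ) < y.2) ∧
    (p'.2 (e' x) < p'.2 (e' y) ↔ σ.2 x.1 < σ.2 y.1 ∨
      x.1 = y.1 ∧ ((α' x.1).2 x.2 : ℕ) < (α' y.1).2 y.2))
    (q : ℕ) (R : ∀ i, Set (Fin (α i).1 × Fin (α' i).1)) (hR : ∀ i, EFEquiv (α i) (α' i) q (R i)) :
    EFEquiv p p' q (sigmaRel e e' R) := by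
  have hiso : ∀ {q : ℕ} {R : ∀ i, Set (Fin (α i).1 × Fin (α' i).1)},
      (∀ i, EFEquiv (α i) (α' i) q (R i)) → IsPartialIso p p' (sigmaRel e e' R) := by
    rintro q R hR _ ⟨i, a, a', ha, rfl⟩ _ ⟨j, b, b', hb, rfl⟩
    have key : i = j → (((a : ℕ) < b ↔ (a' : ℕ) < b') ∧
        (((α i).2 a : ℕ) < (α j).2 b ↔ ((α' i).2 a' : ℕ) < (α' j).2 b')) := by
      rintro rfl
      exact (hR i).isPartialIso _ ha _ hb
    simp only [(he _ _).1, (he _ _).2, (he' _ _).1, (he' _ _).2]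
    by_cases hij : i = j
    · exact ⟨or_congr_right (and_congr_right fun h => (key h).1),
        or_congr_right (and_congr_right fun h => (key h).2)⟩
    · simp [hij]
  have hupd : ∀ {q : ℕ} {R : ∀ i, Set (Fin (α i).1 × Fin (α' i).1)},
      (∀ i, EFEquiv (α i) (α' i) (q + 1) (R i)) → ∀ i a a',
      EFEquiv (α i) (α' i) q (insert (a, a') (R i)) →
      ∀ j, EFEquiv (α j) (α' j) q (Function.update R i (insert (a, a') (R i)) j) := by
    intro q R hR i a a' h j
    by_cases hj : j = i
    · subst hj
      rwa [Function.update_self]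
    · rw [Function.update_of_ne hj]
      exact (hR j).of_le (Nat.le_succ q)
  induction q generalizing R with
  | zero => exact hiso hR
  | succ q ih =>
    refine ⟨hiso hR, fun x => ?_, fun x' => ?_⟩
    · obtain ⟨⟨i, a⟩, rfl⟩ := e.surjective x
      obtain ⟨a', ha⟩ := (hR i).2.1 a
      refine ⟨e' ⟨i, a'⟩, ?_⟩
      rw [← sigmaRel_update]
      exact ih _ (hupd hR i a a' ha)
    · obtain ⟨⟨i, a'⟩, rfl⟩ := e'.surjective x'
      obtain ⟨a, ha⟩ := (hR i).2.2 a'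
      refine ⟨e ⟨i, a⟩, ?_⟩
      rw [← sigmaRel_update]
      exact ih _ (hupd hR i a a' ha)

theorem IsInflation.permType_eq {σ : SPerm} {α α' : Fin σ.1 → SPerm} {p p' : SPerm} {q : ℕ}
    (h : IsInflation σ α p) (h' : IsInflation σ α' p')
    (hα : ∀ i, permType q (α i) = permType q (α' i)) : permType q p = permType q p' := by
  obtain ⟨e, he⟩ := h
  obtain ⟨e', he'⟩ := h'
  rw [permType_eq_iff]
  exact (efEquiv_sigmaRel he he' q (fun _ => ∅) fun i => permType_eq_iff.1 (hα i)).mono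
    (Set.empty_subset _)

theorem EFEquiv.exists_extend {p p' : SPerm} {k q : ℕ} {R : Set (Fin p.1 × Fin p'.1)}
    (H : EFEquiv p p' (q + k) R) (f : Fin k → Fin p.1) :
    ∃ f' : Fin k → Fin p'.1, EFEquiv p p' q (R ∪ Set.range fun i => (f i, f' i)) := by
  induction k generalizing R with
  | zero => exact ⟨Fin.elim0, by simpa [Set.range_eq_empty] using H⟩
  | succ k ih =>
    obtain ⟨b', hb⟩ := H.2.1 (f 0)
    obtain ⟨f', hf⟩ := ih hb (Fin.tail f)
    refine ⟨Fin.cons b' f', hf.mono ?_⟩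
    rintro x (hx | ⟨i, rfl⟩)
    · exact Or.inl (Or.inr hx)
    · refine Fin.cases ?_ (fun i => ?_) i
      · exact Or.inl (Or.inl rfl)
      · exact Or.inr ⟨i, rfl⟩

theorem EFEquiv.symm {p p' : SPerm} {q : ℕ} {R : Set (Fin p.1 × Fin p'.1)}
    (H : EFEquiv p p' q R) : EFEquiv p' p q (Prod.swap ⁻¹' R) := by
  have hiso : ∀ {R : Set (Fin p.1 × Fin p'.1)}, IsPartialIso p p' R →
      IsPartialIso p' p (Prod.swap ⁻¹' R) := fun h x hx y hy =>
    ⟨(h _ hx _ hy).1.symm, (h _ hx _ hy).2.symm⟩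
  have hins : ∀ (R : Set (Fin p.1 × Fin p'.1)) a a',
      insert (a', a) (Prod.swap ⁻¹' R) = Prod.swap ⁻¹' (insert (a, a') R) := by
    rintro R a a'
    ext ⟨x, y⟩
    simp [and_comm]
  induction q generalizing R with
  | zero => exact hiso H
  | succ q ih =>
    refine ⟨hiso H.1, fun a' => ?_, fun a => ?_⟩
    · obtain ⟨a, ha⟩ := H.2.2 a'
      exact ⟨a, by rw [hins]; exact ih ha⟩
    · obtain ⟨a', ha⟩ := H.2.1 a
      exact ⟨a', by rw [hins]; exact ih ha⟩

theorem EFEquiv.exists_extend_fintype {p p' : SPerm} {ι : Type*} [Fintype ι] {q : ℕ}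
    {R : Set (Fin p.1 × Fin p'.1)} (H : EFEquiv p p' (q + Fintype.card ι) R) (f : ι → Fin p.1) :
    ∃ f' : ι → Fin p'.1, EFEquiv p p' q (R ∪ Set.range fun i => (f i, f' i)) := by
  obtain ⟨g, hg⟩ := H.exists_extend (f ∘ (Fintype.equivFin ι).symm)
  refine ⟨g ∘ Fintype.equivFin ι, hg.mono ?_⟩
  refine Set.union_subset_union_right _ ?_
  rintro _ ⟨i, rfl⟩
  exact ⟨Fintype.equivFin ι i, by simp⟩

theorem IsPartialIso.lt_iff {p p' : SPerm} {R : Set (Fin p.1 × Fin p'.1)}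
    (H : IsPartialIso p p' R) {a b : Fin p.1} {a' b' : Fin p'.1} (ha : (a, a') ∈ R)
    (hb : (b, b') ∈ R) : a < b ↔ a' < b' :=
  (H _ ha _ hb).1

theorem IsPartialIso.val_lt_iff {p p' : SPerm} {R : Set (Fin p.1 × Fin p'.1)}
    (H : IsPartialIso p p' R) {a b : Fin p.1} {a' b' : Fin p'.1} (ha : (a, a') ∈ R)
    (hb : (b, b') ∈ R) : p.2 a < p.2 b ↔ p'.2 a' < p'.2 b' :=
  (H _ ha _ hb).2

theorem IsPartialIso.eq_of_eq {p p' : SPerm} {R : Set (Fin p.1 × Fin p'.1)}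
    (H : IsPartialIso p p' R) {a : Fin p.1} {a' b' : Fin p'.1} (ha : (a, a') ∈ R)
    (hb : (a, b') ∈ R) : a' = b' := by
  have h1 := H.lt_iff ha hb
  have h2 := H.lt_iff hb ha
  simp only [lt_self_iff_false, false_iff, not_lt] at h1 h2
  exact le_antisymm h2 h1

theorem contains_of_permType_eq {k : ℕ} (σ : Perm k) {p p' : SPerm}
    (h : permType k p = permType k p') (hc : Contains σ p.2) : Contains σ p'.2 := by
  obtain ⟨f, hf, hσ⟩ := hc
  obtain ⟨f', hf'⟩ := EFEquiv.exists_extend (q := 0) (by simpa using permType_eq_iff.1 h) f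
  have H := hf'.isPartialIso
  have hm : ∀ s, (f s, f' s) ∈ ∅ ∪ Set.range fun i => (f i, f' i) := fun s => Or.inr ⟨s, rfl⟩
  exact ⟨f', fun s t hst => (H.lt_iff (hm s) (hm t)).1 (hf hst),
    fun s t => (H.val_lt_iff (hm s) (hm t)).symm.trans (hσ s t)⟩

theorem containsBlocked_of_permType_eq {k : ℕ} (σ : Perm k) (D : Set ℕ) {p p' : SPerm}
    (h : permType (k + 1) p = permType (k + 1) p') (hc : ContainsBlocked p.2 σ D) :
    ContainsBlocked p'.2 σ D := by
  obtain ⟨f, hf, hσ, hD⟩ := hc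
  obtain ⟨f', hf'⟩ := EFEquiv.exists_extend (q := 1)
    (by simpa [add_comm] using permType_eq_iff.1 h) f
  have H := hf'.isPartialIso
  have hm : ∀ s, (f s, f' s) ∈ ∅ ∪ Set.range fun i => (f i, f' i) := fun s => Or.inr ⟨s, rfl⟩
  have hmono : StrictMono f' := fun s t hst => (H.lt_iff (hm s) (hm t)).1 (hf hst)
  refine ⟨f', hmono,
    fun s t => (H.val_lt_iff (hm s) (hm t)).symm.trans (hσ s t), fun s hs h1 h2 => ?_⟩
  have hlt : f' ⟨s - 1, by omega⟩ < f' ⟨s, h2⟩ := hmono (Fin.mk_lt_mk.2 (by omega))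
  by_contra hne
  have hlt' : (f' ⟨s - 1, by omega⟩ : ℕ) < f' ⟨s, h2⟩ := hlt
  let y : Fin p'.1 := ⟨f' ⟨s - 1, by omega⟩ + 1, by omega⟩
  obtain ⟨x, hx⟩ := hf'.2.2 y
  have hx0 := hx.isPartialIso
  have e1 := (hx0.lt_iff (Or.inr (hm ⟨s - 1, by omega⟩)) (Or.inl rfl)).2
    (Fin.mk_lt_mk.2 (Nat.lt_succ_self _))
  have e2 := (hx0.lt_iff (Or.inl rfl) (Or.inr (hm ⟨s, h2⟩))).2
    (Fin.lt_def.2 (show (f' ⟨s - 1, by omega⟩ : ℕ) + 1 < f' ⟨s, h2⟩ by omega))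
  have := hD s hs h1 h2
  rw [Fin.lt_def] at e1 e2
  omega

theorem avoidsBarred_of_permType_eq {k : ℕ} (σ : Perm k) (S : Set (Fin k)) {p p' : SPerm}
    (h : permType (k + k) p = permType (k + k) p') (hc : AvoidsBarred p.2 σ S) :
    AvoidsBarred p'.2 σ S := by
  classical
  intro e' he' hσ'
  have hcard : Fintype.card {s : Fin k // s ∉ S} ≤ k :=
    (Fintype.card_subtype_le _).trans (Fintype.card_fin k).le
  obtain ⟨e, he⟩ := EFEquiv.exists_extend_fintype (q := k)
    ((permType_eq_iff.1 h.symm).of_le (by omega)) e'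
  have H := he.isPartialIso
  have hm : ∀ s, (e' s, e s) ∈ ∅ ∪ Set.range fun i => (e' i, e i) := fun s => Or.inr ⟨s, rfl⟩
  obtain ⟨f, hf, hσ, hfe⟩ := hc e (fun s t hst => (H.lt_iff (hm s) (hm t)).1 (he' hst))
    (fun s t => (H.val_lt_iff (hm s) (hm t)).symm.trans (hσ' s t))
  obtain ⟨f', hf'⟩ := EFEquiv.exists_extend (q := 0)
    (by simpa only [Nat.zero_add, Set.empty_union] using he.symm) f
  have G := hf'.isPartialIso
  refine ⟨f', fun s t hst => ?_, fun s t => ?_, fun s => ?_⟩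
  · exact (G.lt_iff (Or.inr ⟨s, rfl⟩) (Or.inr ⟨t, rfl⟩)).1 (hf hst)
  · exact (G.val_lt_iff (Or.inr ⟨s, rfl⟩) (Or.inr ⟨t, rfl⟩)).symm.trans (hσ s t)
  · refine G.eq_of_eq (a := f s) (Or.inr ⟨s.1, rfl⟩) (Or.inl ?_)
    rw [hfe s]
    exact ⟨s, rfl⟩

/-- `p` is cut by a position into a prefix and a suffix such that all values in the prefix are
smaller than those of the suffix if `b` holds, and larger otherwise. -/
def Splits (b : Prop) (p : SPerm) : Prop :=
  ∃ x w : Fin p.1, x < w ∧ ∀ y z, y ≤ x → x < z → (p.2 y < p.2 z ↔ b)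

theorem splits_of_permType_eq {b : Prop} {p p' : SPerm} (h : permType 4 p = permType 4 p')
    (hs : Splits b p) : Splits b p' := by
  obtain ⟨x, w, hxw, hb⟩ := hs
  obtain ⟨x', h1⟩ := (permType_eq_iff.1 h).2.1 x
  obtain ⟨w', h2⟩ := h1.2.1 w
  refine ⟨x', w', (h2.isPartialIso.lt_iff (by simp) (by simp)).1 hxw, fun y' z' hy hz => ?_⟩
  obtain ⟨y, h3⟩ := h2.2.2 y'
  obtain ⟨z, h4⟩ := h3.2.2 z'
  have H := h4.isPartialIso
  rw [← hb y z, H.val_lt_iff (a' := y') (b' := z') (by simp) (by simp)]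
  · exact not_lt.1 fun h => not_lt.2 hy ((H.lt_iff (by simp) (by simp)).1 h)
  · exact (H.lt_iff (by simp) (by simp)).2 hz

theorem exists_standardization {A K : Type*} [Fintype A] [LinearOrder K] (u v : A → K)
    (hu : Function.Injective u) (hv : Function.Injective v) :
    ∃ (p : SPerm) (e : Fin p.1 ≃ A), ∀ s t,
      (s < t ↔ u (e s) < u (e t)) ∧ (p.2 s < p.2 t ↔ v (e s) < v (e t)) := by
  have key : ∀ w : A → K, Function.Injective w →
      ∃ e : Fin (Fintype.card A) ≃ A, ∀ s t, s < t ↔ w (e s) < w (e t) := by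
    intro w hw
    let : LinearOrder A := LinearOrder.lift' w hw
    let e : Fin (Fintype.card A) ≃o A := Fintype.orderIsoFinOfCardEq A rfl
    exact ⟨e.toEquiv, fun s t => (e.lt_iff_lt (x := s) (y := t)).symm⟩
  obtain ⟨e, he⟩ := key u hu
  obtain ⟨e', he'⟩ := key v hv
  exact ⟨⟨_, e.trans e'.symm⟩, e, fun s t => ⟨he s t, by simp [he']⟩⟩

theorem fin_strictMono_eq_id {n : ℕ} {g : Fin n → Fin n} (hg : StrictMono g) (x : Fin n) :
    g x = x := by
  let f : Fin n ≃o Fin n := hg.orderIsoOfSurjective g (Finite.surjective_of_injective hg.injective)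
  have : f = OrderIso.refl _ := Subsingleton.elim _ _
  exact congrArg (fun h : Fin n ≃o Fin n => h x) this

theorem perm_eq_of_lt_iff {n : ℕ} {π π' : Perm n} (h : ∀ s t, π s < π t ↔ π' s < π' t) :
    π = π' := by
  have hm : StrictMono (π' ∘ π.symm) := fun s t hst => by
    have := h (π.symm s) (π.symm t)
    simp only [Equiv.apply_symm_apply] at this
    exact this.1 hst
  ext x
  have := fin_strictMono_eq_id hm (π x)
  simp only [Function.comp_apply, Equiv.symm_apply_apply] at this
  rw [this]

theorem sperm_eq_of_equiv {p p' : SPerm} (g : Fin p.1 ≃ Fin p'.1)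
    (h : ∀ s t, (s < t → g s < g t) ∧ (p.2 s < p.2 t ↔ p'.2 (g s) < p'.2 (g t))) : p = p' := by
  obtain ⟨n, π⟩ := p
  obtain ⟨n', π'⟩ := p'
  obtain rfl : n = n' := by simpa using Fintype.card_congr g
  have hg : ∀ x, g x = x := fun x => fin_strictMono_eq_id (g := g) (fun s t hst => (h s t).1 hst) x
  congr 1
  refine perm_eq_of_lt_iff fun s t => ?_
  have := (h s t).2
  simpa only [hg] using this

/-- The pattern of `p` on the set of indices `S` is `α`. -/
def IsPart (p : SPerm) (S : Set (Fin p.1)) (α : SPerm) : Prop :=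
  ∃ f : Fin α.1 → Fin p.1, StrictMono f ∧ Set.range f = S ∧
    ∀ a b, α.2 a < α.2 b ↔ p.2 (f a) < p.2 (f b)

theorem exists_isPart (p : SPerm) (S : Set (Fin p.1)) : ∃ α, IsPart p S α := by
  classical
  obtain ⟨α, e, he⟩ := exists_standardization (A := S) (fun x => x.1) (fun x => p.2 x.1)
    Subtype.val_injective (p.2.injective.comp Subtype.val_injective)
  refine ⟨α, fun a => (e a).1, fun a b hab => (he a b).1.1 hab, ?_, fun a b => (he a b).2⟩
  ext x
  constructor
  · rintro ⟨a, rfl⟩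
    exact (e a).2
  · intro hx
    exact ⟨e.symm ⟨x, hx⟩, by simp⟩

theorem IsPart.contains {p : SPerm} {S : Set (Fin p.1)} {α : SPerm} (h : IsPart p S α) :
    Contains α.2 p.2 := by
  obtain ⟨f, hf, -, h⟩ := h
  exact ⟨f, hf, fun a b => (h a b).symm⟩

theorem IsPart.eq {p : SPerm} {S : Set (Fin p.1)} {α α' : SPerm} (h : IsPart p S α)
    (h' : IsPart p S α') : α = α' := by
  obtain ⟨f, hf, hr, h⟩ := h
  obtain ⟨f', hf', hr', h'⟩ := h'
  let g : Fin α.1 ≃ Fin α'.1 := (Equiv.ofInjective f hf.injective).trans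
    ((Equiv.setCongr (hr.trans hr'.symm)).trans (Equiv.ofInjective f' hf'.injective).symm)
  have hg : ∀ a, f' (g a) = f a := fun a => by
    simp [g, Equiv.apply_ofInjective_symm]
  refine sperm_eq_of_equiv g fun s t => ⟨fun hst => ?_, ?_⟩
  · rw [← hf'.lt_iff_lt, hg, hg]
    exact hf hst
  · rw [h, h', hg, hg]

/-- The quotient of `p` by the fibres of `q` is `σ`. -/
def IsQuot (p σ : SPerm) (q : Fin p.1 → Fin σ.1) : Prop :=
  Monotone q ∧ Function.Surjective q ∧
    ∀ x y, q x ≠ q y → (p.2 x < p.2 y ↔ σ.2 (q x) < σ.2 (q y))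

theorem IsQuot.lt_of_lt {p σ : SPerm} {q : Fin p.1 → Fin σ.1} (h : IsQuot p σ q) {x y : Fin p.1}
    (hxy : q x < q y) : x < y :=
  lt_of_not_ge fun hle => not_lt.2 (h.1 hle) hxy

theorem exists_isInflation (σ : SPerm) (α : Fin σ.1 → SPerm) : ∃ p, IsInflation σ α p := by
  have h1 : ∀ x y : Σ i, Fin (α i).1, x.1 = y.1 → (x.2 : ℕ) = y.2 → x = y := by
    rintro ⟨i, a⟩ ⟨j, b⟩ h1 h2
    dsimp only at h1 h2
    subst h1
    rw [Fin.ext h2]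
  have h2 : ∀ x y : Σ i, Fin (α i).1, x.1 = y.1 → ((α x.1).2 x.2 : ℕ) = (α y.1).2 y.2 →
      x = y := by
    rintro ⟨i, a⟩ ⟨j, b⟩ h1 h2
    dsimp only at h1 h2
    subst h1
    rw [(α i).2.injective (Fin.ext h2)]
  obtain ⟨p, e, he⟩ := exists_standardization (A := Σ i, Fin (α i).1) (K := ℕ ×ₗ ℕ)
    (fun x => toLex (x.1.1, x.2.1)) (fun x => toLex ((σ.2 x.1).1, ((α x.1).2 x.2).1))
    (fun x y hxy => by
      obtain ⟨e1, e2⟩ := Prod.mk.inj (toLex.injective hxy)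
      exact h1 x y (Fin.ext e1) e2)
    (fun x y hxy => by
      obtain ⟨e1, e2⟩ := Prod.mk.inj (toLex.injective hxy)
      exact h2 x y (σ.2.injective (Fin.ext e1)) e2)
  refine ⟨p, e.symm, fun x y => ?_⟩
  obtain ⟨x, rfl⟩ := e.surjective x
  obtain ⟨y, rfl⟩ := e.surjective y
  have := he x y
  simp only [Prod.Lex.toLex_lt_toLex] at this
  simp only [Equiv.symm_apply_apply]
  refine ⟨this.1.trans (or_congr Iff.rfl (and_congr_left' Fin.ext_iff.symm)),
    this.2.trans (or_congr Iff.rfl (and_congr_left' ?_))⟩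
  rw [← Fin.ext_iff, σ.2.injective.eq_iff]

theorem IsInflation.eq {σ : SPerm} {α : Fin σ.1 → SPerm} {p p' : SPerm}
    (h : IsInflation σ α p) (h' : IsInflation σ α p') : p = p' := by
  obtain ⟨e, he⟩ := h
  obtain ⟨e', he'⟩ := h'
  refine sperm_eq_of_equiv (e.symm.trans e') fun s t => ?_
  have h1 := he (e.symm s) (e.symm t)
  have h2 := he' (e.symm s) (e.symm t)
  simp only [Equiv.apply_symm_apply] at h1
  simp only [Equiv.trans_apply]
  exact ⟨(h1.1.trans h2.1.symm).1, h1.2.trans h2.2.symm⟩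

theorem IsInflation.length_eq {σ : SPerm} {α : Fin σ.1 → SPerm} {p : SPerm}
    (h : IsInflation σ α p) : p.1 = ∑ i, (α i).1 := by
  obtain ⟨e, -⟩ := h
  simpa using (Fintype.card_congr e).symm

theorem IsInflation.exists_isQuot {σ : SPerm} {α : Fin σ.1 → SPerm} {p : SPerm}
    (h : IsInflation σ α p) (hα : ∀ i, 1 ≤ (α i).1) :
    ∃ q, IsQuot p σ q ∧ ∀ i, IsPart p (q ⁻¹' {i}) (α i) := by
  obtain ⟨e, he⟩ := h
  refine ⟨fun x => (e.symm x).1, ⟨fun x y hxy => ?_, fun i => ?_, fun x y hxy => ?_⟩, fun i => ?_⟩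
  · by_contra hlt
    have := (he (e.symm y) (e.symm x)).1.2 (Or.inl (not_le.1 hlt))
    simp only [Equiv.apply_symm_apply] at this
    exact not_lt.2 hxy this
  · exact ⟨e ⟨i, ⟨0, hα i⟩⟩, by simp⟩
  · have := (he (e.symm x) (e.symm y)).2
    simp only [Equiv.apply_symm_apply] at this
    rw [this]
    simp [hxy]
  · refine ⟨fun a => e ⟨i, a⟩, fun a b hab => (he _ _).1.2 (Or.inr ⟨rfl, hab⟩), ?_, fun a b => ?_⟩
    · ext x
      simp only [Set.mem_range, Set.mem_preimage, Set.mem_singleton_iff]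
      constructor
      · rintro ⟨a, rfl⟩
        simp
      · obtain ⟨⟨j, a⟩, rfl⟩ := e.surjective x
        simp only [Equiv.symm_apply_apply]
        rintro rfl
        exact ⟨a, rfl⟩
    · rw [(he _ _).2]
      simp

theorem IsQuot.isInflation {p σ : SPerm} {q : Fin p.1 → Fin σ.1} (hq : IsQuot p σ q)
    {α : Fin σ.1 → SPerm} (hα : ∀ i, IsPart p (q ⁻¹' {i}) (α i)) : IsInflation σ α p := by
  choose f hf hr hv using hα
  have hqf : ∀ i a, q (f i a) = i := fun i a => by
    have : f i a ∈ q ⁻¹' {i} := hr i ▸ Set.mem_range_self a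
    exact this
  let g : (Σ i, Fin (α i).1) → Fin p.1 := fun x => f x.1 x.2
  have hg : Function.Bijective g := by
    constructor
    · rintro ⟨i, a⟩ ⟨j, b⟩ hab
      have hij : i = j := by rw [← hqf i a, ← hqf j b]; exact congrArg q hab
      subst hij
      exact congrArg (Sigma.mk i) ((hf i).injective hab)
    · intro x
      have : x ∈ Set.range (f (q x)) := by rw [hr]; rfl
      obtain ⟨a, ha⟩ := this
      exact ⟨⟨q x, a⟩, ha⟩
  refine ⟨Equiv.ofBijective g hg, ?_⟩
  rintro ⟨i, a⟩ ⟨j, b⟩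
  simp only [Equiv.ofBijective_apply, g]
  by_cases hij : i = j
  · subst hij
    simp only [lt_self_iff_false, true_and, false_or, (hf i).lt_iff_lt, ← hv]
    exact ⟨Iff.rfl, Iff.rfl⟩
  · simp only [hij, false_and, or_false]
    constructor
    · constructor
      · intro h
        have := hq.1 h.le
        rw [hqf, hqf] at this
        exact lt_of_le_of_ne this hij
      · intro h
        apply hq.lt_of_lt
        rwa [hqf, hqf]
    · rw [hq.2.2, hqf, hqf]
      rwa [hqf, hqf]

theorem isPermInterval_iff {n : ℕ} {π : Perm n} {I : Finset (Fin n)} :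
    IsPermInterval π I ↔ (∀ a ∈ I, ∀ b ∈ I, ∀ c, a ≤ c → c ≤ b → c ∈ I) ∧
      ∀ a ∈ I, ∀ b ∈ I, ∀ c, π a ≤ π c → π c ≤ π b → c ∈ I := by
  refine and_congr ⟨fun h a ha b hb c => h ha hb, fun h a c b ha hb => h a ha b hb c⟩
    ⟨fun h a ha b hb c h1 h2 => ?_, fun h a c b ha hb h1 h2 => ?_⟩
  · simpa using h (Finset.mem_image_of_mem π ha) (Finset.mem_image_of_mem π hb) h1 h2
  · obtain ⟨a, ha', rfl⟩ := Finset.mem_image.1 ha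
    obtain ⟨b, hb', rfl⟩ := Finset.mem_image.1 hb
    obtain ⟨c, rfl⟩ := π.surjective c
    exact Finset.mem_image_of_mem π (h a ha' b hb' c h1 h2)

theorem IsSimple.mem_of_interval {n : ℕ} {π : Perm n} (hπ : IsSimple π) {I : Fin n → Prop}
    (h1 : ∀ a b c, I a → I b → a < c → c < b → I c)
    (h2 : ∀ a b c, I a → I b → π a < π c → π c < π b → I c)
    {a b : Fin n} (ha : I a) (hb : I b) (hab : a ≠ b) (c : Fin n) : I c := by
  classical
  have hint : IsPermInterval π (Finset.univ.filter I) := by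
    rw [isPermInterval_iff]
    simp only [Finset.mem_filter, Finset.mem_univ, true_and]
    refine ⟨fun a ha b hb c hac hcb => ?_, fun a ha b hb c hac hcb => ?_⟩
    · rcases hac.eq_or_lt with rfl | hac
      · exact ha
      rcases hcb.eq_or_lt with rfl | hcb
      · exact hb
      exact h1 a b c ha hb hac hcb
    · rcases hac.eq_or_lt with h | hac
      · rwa [← π.injective h]
      rcases hcb.eq_or_lt with h | hcb
      · rwa [π.injective h]
      exact h2 a b c ha hb hac hcb
  rcases hπ _ hint with h | h
  · exact absurd (Finset.card_le_one.1 h a (by simpa using ha) b (by simpa using hb)) hab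
  · have : Finset.univ.filter I = Finset.univ := Finset.eq_univ_of_card _ (by simpa using h)
    simpa using Finset.ext_iff.1 this c

theorem IsQuot.fibre_convex {p σ : SPerm} {q : Fin p.1 → Fin σ.1} (hq : IsQuot p σ q)
    {x y z : Fin p.1} (hxy : q x = q y) (hxz : x ≤ z) (hzy : z ≤ y) : q z = q x :=
  le_antisymm (hxy ▸ hq.1 hzy) (hq.1 hxz)

theorem IsQuot.fibre_val_convex {p σ : SPerm} {q : Fin p.1 → Fin σ.1} (hq : IsQuot p σ q)
    {x y z : Fin p.1} (hxy : q x = q y) (hxz : p.2 x < p.2 z) (hzy : p.2 z < p.2 y) :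
    q z = q x := by
  by_contra hne
  have h1 := (hq.2.2 x z (Ne.symm hne)).1 hxz
  have h2 := (hq.2.2 z y (hxy ▸ hne)).1 hzy
  rw [← hxy] at h2
  exact lt_asymm h1 h2

/-- An interval meeting two fibres of a simple quotient of length at least three is everything. -/
theorem IsQuot.mem_of_interval {p σ : SPerm} {q : Fin p.1 → Fin σ.1} (hq : IsQuot p σ q)
    (hσ : IsSimple σ.2) (hσ3 : 3 ≤ σ.1) {K : Fin p.1 → Prop}
    (h1 : ∀ a b c, K a → K b → a < c → c < b → K c)
    (h2 : ∀ a b c, K a → K b → p.2 a < p.2 c → p.2 c < p.2 b → K c)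
    {x y : Fin p.1} (hx : K x) (hy : K y) (hxy : q x ≠ q y) (z : Fin p.1) : K z := by
  have hall : ∀ c, ∃ w, K w ∧ q w = c := by
    intro c
    refine hσ.mem_of_interval (I := fun c => ∃ w, K w ∧ q w = c) ?_ ?_ ⟨x, hx, rfl⟩ ⟨y, hy, rfl⟩
      hxy c
    · rintro _ _ c ⟨a, ha, rfl⟩ ⟨b, hb, rfl⟩ hac hcb
      obtain ⟨w, rfl⟩ := hq.2.1 c
      exact ⟨w, h1 a b w ha hb (hq.lt_of_lt hac) (hq.lt_of_lt hcb), rfl⟩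
    · rintro _ _ c ⟨a, ha, rfl⟩ ⟨b, hb, rfl⟩ hac hcb
      obtain ⟨w, rfl⟩ := hq.2.1 c
      refine ⟨w, h2 a b w ha hb ((hq.2.2 _ _ ?_).2 hac) ((hq.2.2 _ _ ?_).2 hcb), rfl⟩
      · rintro h; rw [h] at hac; exact lt_irrefl _ hac
      · rintro h; rw [h] at hcb; exact lt_irrefl _ hcb
  by_contra hz
  obtain ⟨a, ha, b, hb, hab⟩ : ∃ a, a ≠ q z ∧ ∃ b, b ≠ q z ∧ a ≠ b := by
    have : 1 < (Finset.univ.erase (q z)).card := by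
      rw [Finset.card_erase_of_mem (Finset.mem_univ _), Finset.card_univ, Fintype.card_fin]
      omega
    obtain ⟨a, ha, b, hb, hab⟩ := Finset.one_lt_card.1 this
    exact ⟨a, Finset.ne_of_mem_erase ha, b, Finset.ne_of_mem_erase hb, hab⟩
  refine hσ.mem_of_interval (I := fun c => c ≠ q z) ?_ ?_ ha hb hab (q z) rfl
  · rintro a b _ ha hb hac hcb rfl
    obtain ⟨a, ha', rfl⟩ := hall a
    obtain ⟨b, hb', rfl⟩ := hall b
    exact hz (h1 a b z ha' hb' (hq.lt_of_lt hac) (hq.lt_of_lt hcb))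
  · rintro a b _ ha hb hac hcb rfl
    obtain ⟨a, ha', rfl⟩ := hall a
    obtain ⟨b, hb', rfl⟩ := hall b
    exact hz (h2 a b z ha' hb' ((hq.2.2 _ _ ha).2 hac) ((hq.2.2 _ _ hb.symm).2 hcb))

theorem IsQuot.fibre_eq_of_simple {p σ σ' : SPerm} {q : Fin p.1 → Fin σ.1}
    {q' : Fin p.1 → Fin σ'.1} (hq : IsQuot p σ q) (hq' : IsQuot p σ' q') (hσ : IsSimple σ.2)
    (hσ' : IsSimple σ'.2) (h3 : 3 ≤ σ.1) (h2 : 2 ≤ σ'.1) (x y : Fin p.1) :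
    q x = q y ↔ q' x = q' y := by
  have key : ∀ x y, q' x = q' y → q x = q y := by
    intro x y hxy
    by_contra hne
    have hall := hq.mem_of_interval hσ h3 (K := fun z => q' z = q' x)
      (fun a b c ha hb hac hcb => (hq'.fibre_convex (ha.trans hb.symm) hac.le hcb.le).trans ha)
      (fun a b c ha hb hac hcb => (hq'.fibre_val_convex (ha.trans hb.symm) hac hcb).trans ha)
      rfl hxy.symm hne
    obtain ⟨z0, h0⟩ := hq'.2.1 ⟨0, by omega⟩
    obtain ⟨z1, h1⟩ := hq'.2.1 ⟨1, by omega⟩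
    have := (hall z0).trans (hall z1).symm
    rw [h0, h1] at this
    simp at this
  refine ⟨fun hxy => ?_, key x y⟩
  by_contra hne
  have hall : ∀ c, ∃ w, q w = q x ∧ q' w = c := by
    intro c
    refine hσ'.mem_of_interval (I := fun c => ∃ w, q w = q x ∧ q' w = c) ?_ ?_ ⟨x, rfl, rfl⟩
      ⟨y, hxy.symm, rfl⟩ hne c
    · rintro _ _ c ⟨a, ha, rfl⟩ ⟨b, hb, rfl⟩ hac hcb
      obtain ⟨w, rfl⟩ := hq'.2.1 c
      exact ⟨w, (hq.fibre_convex (ha.trans hb.symm) (hq'.lt_of_lt hac).le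
        (hq'.lt_of_lt hcb).le).trans ha, rfl⟩
    · rintro _ _ c ⟨a, ha, rfl⟩ ⟨b, hb, rfl⟩ hac hcb
      obtain ⟨w, rfl⟩ := hq'.2.1 c
      refine ⟨w, (hq.fibre_val_convex (ha.trans hb.symm) ((hq'.2.2 _ _ ?_).2 hac)
        ((hq'.2.2 _ _ ?_).2 hcb)).trans ha, rfl⟩
      · rintro h; rw [h] at hac; exact lt_irrefl _ hac
      · rintro h; rw [h] at hcb; exact lt_irrefl _ hcb
  have hconst : ∀ w, q w = q x := fun w => by
    obtain ⟨z, hz, hz'⟩ := hall (q' w)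
    rw [← hz]
    exact (key z w hz').symm
  obtain ⟨z0, h0⟩ := hq.2.1 ⟨0, by omega⟩
  obtain ⟨z1, h1⟩ := hq.2.1 ⟨1, by omega⟩
  have := (hconst z0).trans (hconst z1).symm
  rw [h0, h1] at this
  simp at this

theorem splits_of_cut {b : Prop} {p : SPerm} (c : Fin p.1 → Prop)
    (hc : ∀ x y, x ≤ y → c y → c x) (h0 : ∃ x, c x) (h1 : ∃ w, ¬ c w)
    (h : ∀ y z, c y → ¬ c z → (p.2 y < p.2 z ↔ b)) : Splits b p := by
  classical
  obtain ⟨x0, hx0⟩ := h0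
  obtain ⟨w, hw⟩ := h1
  have hne : (Finset.univ.filter c).Nonempty := ⟨x0, by simpa using hx0⟩
  let x := (Finset.univ.filter c).max' hne
  have hx : c x := by simpa using Finset.max'_mem _ hne
  have hmax : ∀ z, x < z → ¬ c z := fun z hz hcz =>
    not_lt.2 (Finset.le_max' (Finset.univ.filter c) z (by simpa using hcz)) hz
  exact ⟨x, w, lt_of_not_ge fun hle => hw (hc _ _ hle hx),
    fun y z hy hz => h y z (hc _ _ hy hx) (hmax z hz)⟩

/-- If the skeleton `σ` has length two, then the first part does not split the way `σ` does. -/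
def FirstUnsplit (σ : SPerm) (α : Fin σ.1 → SPerm) : Prop :=
  ∀ i j : Fin σ.1, i < j → (∀ k, k = i ∨ k = j) → ¬ Splits (σ.2 i < σ.2 j) (α i)

theorem IsQuot.fibre_le_of_two {p σ σ' : SPerm} {q : Fin p.1 → Fin σ.1} {q' : Fin p.1 → Fin σ'.1}
    (hq : IsQuot p σ q) (hq' : IsQuot p σ' q') {i j : Fin σ.1} (hij : i < j)
    (hall : ∀ k, k = i ∨ k = j) {i' j' : Fin σ'.1} (hij' : i' < j')
    (hall' : ∀ k, k = i' ∨ k = j') {α : Fin σ.1 → SPerm}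
    (hα : ∀ i, IsPart p (q ⁻¹' {i}) (α i)) (h : FirstUnsplit σ α) (x : Fin p.1) (hx : q x = i) :
    q' x = i' := by
  by_contra hne
  apply h i j hij hall
  obtain ⟨f, hf, hr, hv⟩ := hα i
  have hfi : ∀ a, q (f a) = i := fun a => by
    have : f a ∈ q ⁻¹' {i} := hr ▸ Set.mem_range_self a
    exact this
  have hpre : ∀ z, q z = i → ∃ a, f a = z := fun z hz => by
    have : z ∈ Set.range f := by rw [hr]; exact hz
    exact this
  have hle : ∀ k, i ≤ k := fun k => by rcases hall k with rfl | rfl; exacts [le_rfl, hij.le]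
  have hle2 : ∀ k, k ≤ j := fun k => by rcases hall k with rfl | rfl; exacts [hij.le, le_rfl]
  have hle' : ∀ k, i' ≤ k := fun k => by rcases hall' k with rfl | rfl; exacts [le_rfl, hij'.le]
  have hle2' : ∀ k, k ≤ j' := fun k => by rcases hall' k with rfl | rfl; exacts [hij'.le, le_rfl]
  obtain ⟨a, ha⟩ := hq.2.1 i
  obtain ⟨a', ha'⟩ := hq'.2.1 i'
  obtain ⟨b, hb⟩ := hq.2.1 j
  obtain ⟨b', hb'⟩ := hq'.2.1 j'
  have hs : q (min a a') = i := le_antisymm (ha ▸ hq.1 (min_le_left _ _)) (hle _)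
  have hs' : q' (min a a') = i' := le_antisymm (ha' ▸ hq'.1 (min_le_right _ _)) (hle' _)
  have ht : q (max b b') = j := le_antisymm (hle2 _) (hb ▸ hq.1 (le_max_left _ _))
  have ht' : q' (max b b') = j' := le_antisymm (hle2' _) (hb' ▸ hq'.1 (le_max_right _ _))
  have e1 := hq.2.2 (min a a') (max b b') (by rw [hs, ht]; exact hij.ne)
  have e2 := hq'.2.2 (min a a') (max b b') (by rw [hs', ht']; exact hij'.ne)
  rw [hs, ht] at e1
  rw [hs', ht', e1] at e2
  refine splits_of_cut (fun a => q' (f a) = i') ?_ ?_ ?_ ?_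
  · intro y z hyz hz
    exact le_antisymm (hz ▸ hq'.1 (hf.monotone hyz)) (hle' _)
  · obtain ⟨c, hc⟩ := hpre _ hs
    exact ⟨c, by rw [hc, hs']⟩
  · obtain ⟨c, hc⟩ := hpre _ hx
    exact ⟨c, by rw [hc]; exact hne⟩
  · intro y z hy hz
    have hz' := (hall' _).resolve_left hz
    rw [hv, hq'.2.2, hy, hz', e2]
    rw [hy, hz']
    exact hij'.ne

theorem IsQuot.sigma_eq {p σ σ' : SPerm} {q : Fin p.1 → Fin σ.1} {q' : Fin p.1 → Fin σ'.1}
    (hq : IsQuot p σ q) (hq' : IsQuot p σ' q') (h : ∀ x y, q x = q y ↔ q' x = q' y) :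
    (⟨σ, q⟩ : Σ σ : SPerm, Fin p.1 → Fin σ.1) = ⟨σ', q'⟩ := by
  choose r hr using hq.2.1
  have hg : ∀ x, q' (r (q x)) = q' x := fun x => (h _ _).1 (hr _)
  have hbij : Function.Bijective fun i => q' (r i) := by
    constructor
    · intro i j hij
      have := (h _ _).2 hij
      rwa [hr, hr] at this
    · intro j
      obtain ⟨x, rfl⟩ := hq'.2.1 j
      exact ⟨q x, hg x⟩
  have hmono : ∀ s t, s < t → q' (r s) < q' (r t) := fun s t hst =>
    lt_of_le_of_ne (hq'.1 (hq.lt_of_lt (by rwa [hr, hr])).le) fun he => hst.ne (hbij.1 he)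
  have hσ : σ = σ' := by
    refine sperm_eq_of_equiv (Equiv.ofBijective _ hbij) fun s t => ⟨hmono s t, ?_⟩
    by_cases hst : s = t
    · subst hst; simp
    · have h1 := hq.2.2 (r s) (r t) (by rwa [hr, hr])
      have h2 := hq'.2.2 (r s) (r t) fun he => hst (hbij.1 he)
      rw [hr, hr] at h1
      exact h1.symm.trans h2
  subst hσ
  congr 1
  funext x
  rw [← hg x]
  exact (fin_strictMono_eq_id (fun s t => hmono s t) (q x)).symm

theorem exists_pair_of_length_two {σ : SPerm} (h : σ.1 = 2) :
    ∃ i j : Fin σ.1, i < j ∧ ∀ k, k = i ∨ k = j := by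
  refine ⟨⟨0, by omega⟩, ⟨1, by omega⟩, by simp, fun k => ?_⟩
  simp only [Fin.ext_iff]
  omega

theorem eq_iff_of_two {A : Type*} {i j : A} (hij : i ≠ j) (h : ∀ k, k = i ∨ k = j) {c d : A} :
    c = d ↔ (c = i ↔ d = i) := by
  rcases h c with rfl | rfl <;> rcases h d with rfl | rfl <;> simp [hij, hij.symm]

/-- Uniqueness of the canonical decomposition of a permutation. -/
theorem IsInflation.unique {σ σ' p : SPerm} {α : Fin σ.1 → SPerm} {α' : Fin σ'.1 → SPerm}
    (h : IsInflation σ α p) (h' : IsInflation σ' α' p) (hσ : IsSimple σ.2) (hσ' : IsSimple σ'.2)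
    (h2 : 2 ≤ σ.1) (h2' : 2 ≤ σ'.1) (hα : ∀ i, 1 ≤ (α i).1) (hα' : ∀ i, 1 ≤ (α' i).1)
    (hu : FirstUnsplit σ α) (hu' : FirstUnsplit σ' α') :
    (⟨σ, α⟩ : Σ σ : SPerm, Fin σ.1 → SPerm) = ⟨σ', α'⟩ := by
  obtain ⟨q, hq, hqα⟩ := h.exists_isQuot hα
  obtain ⟨q', hq', hqα'⟩ := h'.exists_isQuot hα'
  have hfib : ∀ x y, q x = q y ↔ q' x = q' y := by
    intro x y
    rcases h2.eq_or_lt with h3 | h3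
    · rcases h2'.eq_or_lt with h3' | h3'
      · obtain ⟨i, j, hij, hall⟩ := exists_pair_of_length_two h3.symm
        obtain ⟨i', j', hij', hall'⟩ := exists_pair_of_length_two h3'.symm
        have key : ∀ x, q x = i ↔ q' x = i' := fun x =>
          ⟨hq.fibre_le_of_two hq' hij hall hij' hall' hqα hu x,
            hq'.fibre_le_of_two hq hij' hall' hij hall hqα' hu' x⟩
        rw [eq_iff_of_two hij.ne hall, eq_iff_of_two hij'.ne hall', key x, key y]
      · exact (hq'.fibre_eq_of_simple hq hσ' hσ h3' h2 x y).symm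
    · exact hq.fibre_eq_of_simple hq' hσ hσ' h3 h2' x y
  have heq := hq.sigma_eq hq' hfib
  obtain ⟨rfl, hqq⟩ := Sigma.mk.inj heq
  obtain rfl := eq_of_heq hqq
  congr 1
  funext i
  exact (hqα i).eq (hqα' i)

theorem Contains.trans {k m n : ℕ} {τ : Perm k} {σ : Perm m} {π : Perm n} (h : Contains τ σ)
    (h' : Contains σ π) : Contains τ π := by
  obtain ⟨f, hf, hτ⟩ := h
  obtain ⟨g, hg, hσ⟩ := h'
  exact ⟨g ∘ f, hg.comp hf, fun s t => (hσ _ _).trans (hτ _ _)⟩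

theorem Contains.refl {n : ℕ} (π : Perm n) : Contains π π :=
  ⟨_root_.id, strictMono_id, fun _ _ => Iff.rfl⟩

theorem Contains.length_le {m n : ℕ} {σ : Perm m} {π : Perm n} (h : Contains σ π) : m ≤ n := by
  obtain ⟨f, hf, -⟩ := h
  simpa using Fintype.card_le_of_injective f hf.injective

theorem IsQuot.id (p : SPerm) : IsQuot p p _root_.id :=
  ⟨monotone_id, Function.surjective_id, fun _ _ _ => Iff.rfl⟩

theorem IsQuot.comp {p σ τ : SPerm} {q : Fin p.1 → Fin σ.1} {q' : Fin σ.1 → Fin τ.1}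
    (hq' : IsQuot σ τ q') (hq : IsQuot p σ q) : IsQuot p τ (q' ∘ q) :=
  ⟨hq'.1.comp hq.1, hq'.2.1.comp hq.2.1, fun x y h =>
    (hq.2.2 x y fun e => h (congrArg q' e)).trans (hq'.2.2 _ _ h)⟩

theorem IsQuot.contains {p σ : SPerm} {q : Fin p.1 → Fin σ.1} (hq : IsQuot p σ q) :
    Contains σ.2 p.2 := by
  choose r hr using hq.2.1
  refine ⟨r, fun s t hst => hq.lt_of_lt (by rwa [hr, hr]), fun s t => ?_⟩
  by_cases h : s = t
  · subst h; simp
  · rw [hq.2.2 _ _ (by rwa [hr, hr]), hr, hr]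

theorem IsQuot.exists_le_fibre {p σ : SPerm} {q : Fin p.1 → Fin σ.1} (hq : IsQuot p σ q)
    {α : Fin σ.1 → SPerm} (hα : ∀ i, IsPart p (q ⁻¹' {i}) (α i)) (i : Fin σ.1) : 1 ≤ (α i).1 := by
  obtain ⟨f, -, hr, -⟩ := hα i
  obtain ⟨x, hx⟩ := hq.2.1 i
  have : x ∈ Set.range f := by rw [hr]; exact hx
  obtain ⟨a, -⟩ := this
  exact Nat.one_le_iff_ne_zero.2 fun h => (h ▸ a : Fin 0).elim0

theorem exists_isQuot_of_splits {b : Prop} {p : SPerm} (h : Splits b p) :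
    ∃ (σ : SPerm) (q : Fin p.1 → Fin σ.1), σ.1 = 2 ∧ IsQuot p σ q ∧
      ∀ α : Fin σ.1 → SPerm, (∀ i, IsPart p (q ⁻¹' {i}) (α i)) → FirstUnsplit σ α := by
  classical
  obtain ⟨τ, hτ⟩ : ∃ τ : Perm 2, (τ 0 < τ 1 ↔ b) := by
    by_cases hb : b
    · exact ⟨1, by simp [hb]⟩
    · exact ⟨Equiv.swap 0 1, by simp [hb]⟩
  obtain ⟨x, ⟨w, hxw, hx⟩, hmin⟩ := (wellFounded_lt (α := Fin p.1)).has_min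
    {x | ∃ w, x < w ∧ ∀ y z, y ≤ x → x < z → (p.2 y < p.2 z ↔ b)} h
  let q : Fin p.1 → Fin 2 := fun y => if y ≤ x then 0 else 1
  have hq0 : ∀ y, q y = 0 ↔ y ≤ x := fun y => by simp [q]
  have hq1 : ∀ y, q y = 1 ↔ x < y := fun y => by simp [q]
  have hcases : ∀ i : Fin 2, i = 0 ∨ i = 1 := by decide
  refine ⟨⟨2, τ⟩, q, rfl, ⟨?_, ?_, ?_⟩, ?_⟩
  · intro y z hyz
    rcases hcases (q z) with h0 | h0
    · rw [h0, (hq0 y).2 (hyz.trans ((hq0 z).1 h0))]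
    · rw [h0]; exact Fin.le_last _
  · intro i
    rcases hcases i with rfl | rfl
    exacts [⟨x, (hq0 x).2 le_rfl⟩, ⟨w, (hq1 w).2 hxw⟩]
  · intro y z hne
    rcases hcases (q y) with h0 | h0 <;> rcases hcases (q z) with h1 | h1
    · exact absurd (h0.trans h1.symm) hne
    · rw [h0, h1, hτ]
      exact hx y z ((hq0 y).1 h0) ((hq1 z).1 h1)
    · have hzy := (hx z y ((hq0 z).1 h1) ((hq1 y).1 h0)).trans hτ.symm
      have h2 : p.2 y ≠ p.2 z := fun e => hne (congrArg q (p.2.injective e))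
      have h3 : τ 0 ≠ τ 1 := fun e => by simpa using τ.injective e
      rw [h0, h1]
      exact ⟨fun hlt => lt_of_le_of_ne (not_lt.1 fun h => lt_asymm hlt (hzy.2 h)) h3.symm,
        fun hlt => lt_of_le_of_ne (not_lt.1 fun h => lt_asymm hlt (hzy.1 h)) h2⟩
    · exact absurd (h0.trans h1.symm) hne
  · intro α hα i j hij hall
    obtain ⟨rfl, rfl⟩ : i = (0 : Fin 2) ∧ j = (1 : Fin 2) :=
      (by decide : ∀ i j : Fin 2, i < j → i = 0 ∧ j = 1) i j hij
    rintro ⟨x1, w1, hxw1, h1⟩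
    obtain ⟨f, hf, hr, hv⟩ := hα (0 : Fin 2)
    have hfx : ∀ a, f a ≤ x := fun a => (hq0 _).1 (by
      have : f a ∈ q ⁻¹' {0} := hr ▸ Set.mem_range_self a
      exact this)
    have hpre : ∀ z, z ≤ x → ∃ a, f a = z := fun z hz => by
      have : z ∈ Set.range f := by rw [hr]; exact (hq0 z).2 hz
      exact this
    have hlt : f x1 < x := (hf hxw1).trans_le (hfx _)
    refine hmin (f x1) ⟨x, hlt, fun y z hy hz => ?_⟩ hlt
    by_cases hzx : z ≤ x
    · obtain ⟨y, rfl⟩ := hpre y (hy.trans hlt.le)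
      obtain ⟨z, rfl⟩ := hpre z hzx
      rw [← hv, h1 y z (hf.le_iff_le.1 hy) (hf.lt_iff_lt.1 hz)]
      exact hτ
    · exact hx y z (hy.trans hlt.le) (not_le.1 hzx)

theorem IsPermInterval.exists_isQuot {σ : SPerm} {I : Finset (Fin σ.1)}
    (hI : IsPermInterval σ.2 I) (hne : I.Nonempty) :
    ∃ (τ : SPerm) (q : Fin σ.1 → Fin τ.1), IsQuot σ τ q ∧
      ∀ x y, q x = q y ↔ x = y ∨ x ∈ I ∧ y ∈ I := by
  rw [isPermInterval_iff] at hI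
  obtain ⟨i0, hi0⟩ := hne
  let r : Fin σ.1 → Fin σ.1 := fun i => if i ∈ I then i0 else i
  have hrI : ∀ i, i ∈ I → r i = i0 := fun i hi => if_pos hi
  have hrN : ∀ i, i ∉ I → r i = i := fun i hi => if_neg hi
  have hrr : ∀ i, r (r i) = r i := fun i => by
    by_cases hi : i ∈ I
    · rw [hrI i hi, hrI i0 hi0]
    · rw [hrN i hi, hrN i hi]
  have hrle : ∀ i j, i ≤ j → r i ≤ r j := by
    intro i j hij
    by_cases hi : i ∈ I <;> by_cases hj : j ∈ I
    · rw [hrI i hi, hrI j hj]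
    · rw [hrI i hi, hrN j hj]
      exact le_of_not_gt fun h => hj (hI.1 i hi i0 hi0 j hij h.le)
    · rw [hrN i hi, hrI j hj]
      exact le_of_not_gt fun h => hi (hI.1 i0 hi0 j hj i h.le hij)
    · rwa [hrN i hi, hrN j hj]
  have hrv : ∀ i j, σ.2 i ≤ σ.2 j → σ.2 (r i) ≤ σ.2 (r j) := by
    intro i j hij
    by_cases hi : i ∈ I <;> by_cases hj : j ∈ I
    · rw [hrI i hi, hrI j hj]
    · rw [hrI i hi, hrN j hj]
      exact le_of_not_gt fun h => hj (hI.2 i hi i0 hi0 j hij h.le)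
    · rw [hrN i hi, hrI j hj]
      exact le_of_not_gt fun h => hi (hI.2 i0 hi0 j hj i h.le hij)
    · rwa [hrN i hi, hrN j hj]
  obtain ⟨τ, e, he⟩ := exists_standardization (A := {i // r i = i}) (fun x => x.1)
    (fun x => σ.2 x.1) Subtype.val_injective (σ.2.injective.comp Subtype.val_injective)
  have hlt : ∀ x y : {i // r i = i}, e.symm x < e.symm y ↔ x.1 < y.1 := fun x y => by
    rw [(he _ _).1]; simp
  have hvlt : ∀ x y : {i // r i = i}, τ.2 (e.symm x) < τ.2 (e.symm y) ↔ σ.2 x.1 < σ.2 y.1 :=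
    fun x y => by rw [(he _ _).2]; simp
  refine ⟨τ, fun i => e.symm ⟨r i, hrr i⟩, ⟨fun i j hij => ?_, fun c => ?_, fun i j hij => ?_⟩,
    fun i j => ?_⟩
  · exact le_of_not_gt fun h => not_lt.2 (hrle i j hij) ((hlt _ _).1 h)
  · exact ⟨(e c).1, by simp [(e c).2]⟩
  · rw [hvlt]
    have hne : σ.2 (r i) ≠ σ.2 (r j) := fun h => hij (by simp [σ.2.injective h])
    exact ⟨fun h => lt_of_le_of_ne (hrv i j h.le) hne,
      fun h => lt_of_not_ge fun h' => not_lt.2 (hrv j i h') h⟩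
  · simp only [EmbeddingLike.apply_eq_iff_eq, Subtype.mk.injEq]
    by_cases hi : i ∈ I <;> by_cases hj : j ∈ I
    · simp [hrI i hi, hrI j hj, hi, hj]
    · have h1 : i ≠ j := fun h => hj (h ▸ hi)
      have h2 : i0 ≠ j := fun h => hj (h ▸ hi0)
      simp [hrI i hi, hrN j hj, hj, h1, h2]
    · have h1 : i ≠ j := fun h => hi (h ▸ hj)
      have h2 : i ≠ i0 := fun h => hi (h ▸ hi0)
      simp [hrN i hi, hrI j hj, hi, h1, h2]
    · simp [hrN i hi, hrN j hj, hi]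

theorem isSimple_of_length_two {σ : SPerm} (h : σ.1 = 2) : IsSimple σ.2 := fun I _ => by
  have := Finset.card_le_univ I
  rw [Fintype.card_fin] at this
  omega

theorem exists_simple_quot (p : SPerm) (h2 : 2 ≤ p.1) :
    ∃ (σ : SPerm) (q : Fin p.1 → Fin σ.1), 2 ≤ σ.1 ∧ IsSimple σ.2 ∧ IsQuot p σ q ∧
      ∀ α : Fin σ.1 → SPerm, (∀ i, IsPart p (q ⁻¹' {i}) (α i)) → FirstUnsplit σ α := by
  classical
  by_cases hs : ∃ b, Splits b p
  · obtain ⟨b, hb⟩ := hs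
    obtain ⟨σ, q, hσ, hq, hu⟩ := exists_isQuot_of_splits hb
    exact ⟨σ, q, hσ.ge, isSimple_of_length_two hσ, hq, hu⟩
  have hex : ∃ n, 2 ≤ n ∧ ∃ (σ : SPerm) (q : Fin p.1 → Fin σ.1), σ.1 = n ∧ IsQuot p σ q :=
    ⟨p.1, h2, p, _root_.id, rfl, IsQuot.id p⟩
  obtain ⟨hn, σ, q, hσn, hq⟩ := Nat.find_spec hex
  have hmin := fun m hm => Nat.find_min hex (m := m) hm
  rw [← hσn] at hn hmin
  refine ⟨σ, q, hn, ?_, hq, ?_⟩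
  · intro I hI
    by_contra hcon
    push Not at hcon
    obtain ⟨a, ha, b, hb, hab⟩ := Finset.one_lt_card.1 hcon.1
    obtain ⟨c, hc⟩ : ∃ c, c ∉ I := by
      by_contra h
      push Not at h
      exact hcon.2 (by rw [Finset.eq_univ_of_forall h, Finset.card_univ, Fintype.card_fin])
    obtain ⟨τ, r, hr, hrI⟩ := hI.exists_isQuot ⟨a, ha⟩
    refine hmin τ.1 ?_ ⟨?_, τ, r ∘ q, rfl, hr.comp hq⟩
    · have h1 : τ.1 ≤ σ.1 := hr.contains.length_le
      refine lt_of_le_of_ne h1 fun h => ?_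
      have hbij := (Fintype.bijective_iff_surjective_and_card r).2 ⟨hr.2.1, by simp [h]⟩
      exact hab (hbij.1 ((hrI a b).2 (Or.inr ⟨ha, hb⟩)))
    · have hne : r a ≠ r c := fun h => by
        rcases (hrI a c).1 h with h | h
        exacts [hc (h ▸ ha), hc h.2]
      have h1 := (r a).2
      have h2 := (r c).2
      rw [Ne, Fin.ext_iff] at hne
      omega
  · intro α _ i j hij hall
    exfalso
    apply hs
    have hi : ∀ k, i ≤ k := fun k => by rcases hall k with rfl | rfl; exacts [le_rfl, hij.le]
    refine ⟨σ.2 i < σ.2 j, splits_of_cut (fun x => q x = i) ?_ (hq.2.1 i) ?_ ?_⟩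
    · intro x y hxy hy
      exact le_antisymm (hy ▸ hq.1 hxy) (hi _)
    · obtain ⟨w, hw⟩ := hq.2.1 j
      exact ⟨w, by rw [hw]; exact hij.ne'⟩
    · intro y z hy hz
      have hz' := (hall _).resolve_left hz
      rw [hq.2.2 y z (by rw [hy, hz']; exact hij.ne), hy, hz']

/-- Existence of the canonical decomposition of a permutation. -/
theorem exists_canonical (p : SPerm) (h2 : 2 ≤ p.1) :
    ∃ (σ : SPerm) (α : Fin σ.1 → SPerm), 2 ≤ σ.1 ∧ IsSimple σ.2 ∧ IsInflation σ α p ∧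
      (∀ i, 1 ≤ (α i).1) ∧ FirstUnsplit σ α ∧ Contains σ.2 p.2 ∧
      ∀ i, Contains (α i).2 p.2 := by
  obtain ⟨σ, q, hσ2, hσ, hq, hu⟩ := exists_simple_quot p h2
  choose α hα using fun i => exists_isPart p (q ⁻¹' {i})
  exact ⟨σ, α, hσ2, hσ, hq.isInflation hα, hq.exists_le_fibre hα, hu α hα, hq.contains,
    fun i => (hα i).contains⟩

/-- Every simple permutation of length at least two contained in `p` belongs to `C`. -/
def SimplesIn (C : ∀ n, Set (Perm n)) (p : SPerm) : Prop :=
  ∀ τ : SPerm, 2 ≤ τ.1 → IsSimple τ.2 → Contains τ.2 p.2 → τ.2 ∈ C τ.1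

theorem SimplesIn.of_contains {C : ∀ n, Set (Perm n)} {p p' : SPerm} (h : SimplesIn C p)
    (hp : Contains p'.2 p.2) : SimplesIn C p' := fun τ h2 hτ hc => h τ h2 hτ (hc.trans hp)

theorem SimplesIn.of_length_le_one (C : ∀ n, Set (Perm n)) {p : SPerm} (h : p.1 ≤ 1) :
    SimplesIn C p := fun τ h2 _ hc => absurd hc.length_le (by omega)

theorem SimplesIn.of_isInflation {C : ∀ n, Set (Perm n)} (hC : IsPermClass C) {p σ : SPerm}
    {α : Fin σ.1 → SPerm} (hσ : σ.2 ∈ C σ.1) (h : IsInflation σ α p) (hα : ∀ i, 1 ≤ (α i).1)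
    (hαC : ∀ i, SimplesIn C (α i)) : SimplesIn C p := by
  obtain ⟨q, hq, hqα⟩ := h.exists_isQuot hα
  rintro τ h2 hτ ⟨f, hf, hfv⟩
  by_cases hinj : Function.Injective (q ∘ f)
  · refine hC τ.2 σ.2 hσ ⟨q ∘ f, fun s t hst => ?_, fun s t => ?_⟩
    · exact lt_of_le_of_ne (hq.1 (hf hst).le) (hinj.ne hst.ne)
    · by_cases hst : s = t
      · subst hst; simp
      · rw [← hfv, hq.2.2 _ _ (hinj.ne hst)]
        rfl
  · simp only [Function.Injective, not_forall] at hinj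
    obtain ⟨a, b, hab, hne⟩ := hinj
    have hall := hτ.mem_of_interval (I := fun c => q (f c) = q (f a))
      (fun x y c hx hy hxc hcy => (hq.fibre_convex (hx.trans hy.symm) (hf hxc).le (hf hcy).le).trans hx)
      (fun x y c hx hy hxc hcy => (hq.fibre_val_convex (hx.trans hy.symm) ((hfv _ _).2 hxc)
        ((hfv _ _).2 hcy)).trans hx) rfl hab.symm hne
    refine hαC (q (f a)) τ h2 hτ ?_
    obtain ⟨g, hg, hr, hgv⟩ := hqα (q (f a))
    have : ∀ c, ∃ d, g d = f c := fun c => by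
      have : f c ∈ Set.range g := by rw [hr]; exact hall c
      exact this
    choose d hd using this
    exact ⟨d, fun s t hst => by rw [← hg.lt_iff_lt, hd, hd]; exact hf hst,
      fun s t => by rw [hgv, hd, hd, hfv]⟩

/-- The containment order on permutations of arbitrary lengths. -/
def ContainedIn (p p' : SPerm) : Prop := Contains p.2 p'.2

instance : IsPreorder SPerm ContainedIn where
  refl p := Contains.refl p.2
  trans _ _ _ h h' := Contains.trans h h'

theorem ContainedIn.eq_of_length_le {p p' : SPerm} (h : ContainedIn p p') (hl : p'.1 ≤ p.1) :
    p = p' := by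
  obtain ⟨n, π⟩ := p
  obtain ⟨n', π'⟩ := p'
  obtain rfl : n = n' := le_antisymm h.length_le hl
  obtain ⟨f, hf, hv⟩ := h
  congr 1
  refine perm_eq_of_lt_iff fun s t => ?_
  simpa only [fin_strictMono_eq_id hf] using (hv s t).symm

theorem containedIn_of_length_le_one {p p' : SPerm} (h : p.1 ≤ 1) (hl : p.1 ≤ p'.1) :
    ContainedIn p p' := by
  have : Subsingleton (Fin p.1) := Fin.subsingleton_iff_le_one.2 h
  exact ⟨Fin.castLE hl, fun s t hst => absurd (Subsingleton.elim s t) hst.ne,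
    fun s t => by simp [Subsingleton.elim s t]⟩

theorem IsInflation.containedIn {σ : SPerm} {α α' : Fin σ.1 → SPerm} {p p' : SPerm}
    (h : IsInflation σ α p) (h' : IsInflation σ α' p') (hα : ∀ i, ContainedIn (α i) (α' i)) :
    ContainedIn p p' := by
  obtain ⟨e, he⟩ := h
  obtain ⟨e', he'⟩ := h'
  choose f hf hv using hα
  have key : ∀ x y : Σ i, Fin (α i).1,
      (e x < e y → e' ⟨x.1, f x.1 x.2⟩ < e' ⟨y.1, f y.1 y.2⟩) ∧
      (p'.2 (e' ⟨x.1, f x.1 x.2⟩) < p'.2 (e' ⟨y.1, f y.1 y.2⟩) ↔ p.2 (e x) < p.2 (e y)) := by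
    rintro ⟨i, a⟩ ⟨j, b⟩
    rw [(he' _ _).1, (he' _ _).2, (he _ _).1, (he _ _).2]
    by_cases hij : i = j
    · subst hij
      simp only [lt_self_iff_false, true_and, false_or]
      exact ⟨fun h => hf i h, hv i a b⟩
    · simp only [hij, false_and, or_false]
      exact ⟨_root_.id, trivial⟩
  refine ⟨fun x => e' ⟨(e.symm x).1, f _ (e.symm x).2⟩, fun x y hxy => ?_, fun x y => ?_⟩
  · exact (key _ _).1 (by simpa using hxy)
  · simpa only [Equiv.apply_symm_apply] using (key (e.symm x) (e.symm y)).2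

theorem IsInflation.part_length_lt {σ : SPerm} {α : Fin σ.1 → SPerm} {p : SPerm}
    (h : IsInflation σ α p) (h2 : 2 ≤ σ.1) (hα : ∀ i, 1 ≤ (α i).1) (i : Fin σ.1) :
    (α i).1 < p.1 := by
  have : Nontrivial (Fin σ.1) := Fin.nontrivial_iff_two_le.2 h2
  obtain ⟨j, hj⟩ := exists_ne i
  rw [h.length_eq]
  exact Finset.single_lt_sum (f := fun i => (α i).1) hj (Finset.mem_univ i) (Finset.mem_univ j) (hα j)
    fun _ _ _ => Nat.zero_le _

/-- The proper predecessors of the terms of a minimal bad sequence are well-quasi-ordered. -/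
theorem partiallyWellOrderedOn_of_isMinBadSeq {A : Type*} {r : A → A → Prop} [IsPreorder A r]
    {rk : A → ℕ} {s : Set A} (hs : ∀ a ∈ s, ∀ b, r b a → b ∈ s) {f : ℕ → A}
    (hf : Set.PartiallyWellOrderedOn.IsBadSeq r s f)
    (hmin : ∀ n, Set.PartiallyWellOrderedOn.IsMinBadSeq r rk s n f) :
    {a | ∃ n, r a (f n) ∧ rk a < rk (f n)}.PartiallyWellOrderedOn r := by
  rw [Set.PartiallyWellOrderedOn.iff_forall_not_isBadSeq]
  rintro g ⟨hg, hbad⟩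
  choose ν hν hrk using hg
  obtain ⟨_, ⟨k0, rfl⟩, hk0⟩ := wellFounded_lt.has_min (Set.range ν) ⟨_, 0, rfl⟩
  have hle : ∀ k, ν k0 ≤ ν k := fun k => not_lt.1 (hk0 _ ⟨k, rfl⟩)
  refine hmin (ν k0) (fun m => if m < ν k0 then f m else g (k0 + (m - ν k0)))
    (fun m hm => (if_pos hm).symm) (by simpa using hrk k0) ⟨fun m => ?_, fun m n hmn h => ?_⟩
  · dsimp only
    split_ifs
    exacts [hf.1 m, hs _ (hf.1 _) _ (hν _)]
  · dsimp only at h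
    by_cases hn : n < ν k0
    · rw [if_pos hn, if_pos (hmn.trans hn)] at h
      exact hf.2 m n hmn h
    · rw [if_neg hn] at h
      by_cases hm : m < ν k0
      · rw [if_pos hm] at h
        exact hf.2 _ _ (hm.trans_le (hle _)) (_root_.trans h (hν _))
      · rw [if_neg hm] at h
        exact hbad _ _ (by omega) h

theorem simplesIn_partiallyWellOrderedOn {C : ∀ n, Set (Perm n)} (hfin : FinitelyManySimples C) :
    {p | SimplesIn C p}.PartiallyWellOrderedOn ContainedIn := by
  rw [Set.PartiallyWellOrderedOn.iff_not_exists_isMinBadSeq Sigma.fst]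
  rintro ⟨f, hf, hmin⟩
  have hlen0 : ∀ n, 1 ≤ (f n).1 := fun n => by
    by_contra h
    exact hf.2 n _ n.lt_succ_self (containedIn_of_length_le_one (by omega) (by omega))
  have hlen : ∀ n, 2 ≤ (f n).1 := fun n => by
    by_contra h
    exact hf.2 n _ n.lt_succ_self
      (containedIn_of_length_le_one (by omega) (le_trans (by omega) (hlen0 _)))
  have hparts := partiallyWellOrderedOn_of_isMinBadSeq (r := ContainedIn)
    (fun a (ha : SimplesIn C a) b (hb : ContainedIn b a) => ha.of_contains hb) hf hmin
  choose σ α hσ2 hσ hinf hα _ hσf hαf using fun n => exists_canonical (f n) (hlen n)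
  have : Finite {p : SPerm | p.2 ∈ C p.1 ∧ IsSimple p.2} := hfin
  let ψ : ℕ → {p : SPerm | p.2 ∈ C p.1 ∧ IsSimple p.2} := fun n =>
    ⟨σ n, hf.1 n _ (hσ2 n) (hσ n) (hσf n), hσ n⟩
  obtain ⟨⟨σ0, hσ0⟩, hinf0⟩ := Finite.exists_infinite_fiber ψ
  obtain ⟨g, hg⟩ : ∃ g : ℕ ↪o ℕ, ∀ k, σ (g k) = σ0 := by
    classical
    refine ⟨Nat.orderEmbeddingOfSet (ψ ⁻¹' {⟨σ0, hσ0⟩}), fun k => ?_⟩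
    exact congrArg Subtype.val (Nat.Subtype.ofNat (ψ ⁻¹' {⟨σ0, hσ0⟩}) k).2
  have hdec : ∀ k, ∃ α' : Fin σ0.1 → SPerm, IsInflation σ0 α' (f (g k)) ∧
      ∀ i, α' i ∈ {a | ∃ n, ContainedIn a (f n) ∧ a.1 < (f n).1} := fun k => by
    rw [← hg k]
    exact ⟨α (g k), hinf _, fun i =>
      ⟨g k, hαf _ i, (hinf _).part_length_lt (hσ2 _) (hα _) i⟩⟩
  choose α' hα' hmem using hdec
  obtain ⟨k, l, hkl, hle⟩ := (Set.PartiallyWellOrderedOn.pi fun _ : Fin σ0.1 => hparts).exists_lt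
    (f := α') fun k i _ => hmem k i
  exact hf.2 _ _ (g.lt_iff_lt.2 hkl) ((hα' k).containedIn (hα' l) hle)

/-- A class with finitely many simple permutations is finitely based relative to the class of all
permutations whose simple patterns it contains. -/
theorem exists_finite_basis {C : ∀ n, Set (Perm n)} (hC : IsPermClass C)
    (hfin : FinitelyManySimples C) :
    ∃ B : Set SPerm, B.Finite ∧
      ∀ p : SPerm, SimplesIn C p → (p.2 ∈ C p.1 ↔ ∀ β ∈ B, ¬ Contains β.2 p.2) := by
  let B : Set SPerm := {p | SimplesIn C p ∧ p.2 ∉ C p.1 ∧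
    ∀ p', ContainedIn p' p → p'.2 ∉ C p'.1 → p' = p}
  refine ⟨B, ?_, fun p hp => ⟨fun h β hβ hc => hβ.2.1 (hC _ _ h hc), fun h => ?_⟩⟩
  · refine IsAntichain.finite_of_partiallyWellOrderedOn (r := ContainedIn) ?_
      ((simplesIn_partiallyWellOrderedOn hfin).mono fun p hp => hp.1)
    exact fun a ha b hb hne hab => hne (hb.2.2 a hab ha.2.1)
  · by_contra hcon
    obtain ⟨β, ⟨hβ, hβC⟩, hmin⟩ := (measure (fun p : SPerm => p.1)).wf.has_min
      {p' : SPerm | ContainedIn p' p ∧ p'.2 ∉ C p'.1} ⟨p, Contains.refl _, hcon⟩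
    refine h β ⟨hp.of_contains hβ, hβC, fun p' hp' hp'C => ?_⟩ hβ
    exact hp'.eq_of_length_le (not_lt.1 (hmin p' ⟨_root_.trans hp' hβ, hp'C⟩))

theorem exists_sizeGF_eq_coe {X : Type*} [Finite X] (s : X → ℕ) :
    ∃ P : Polynomial ℚ, sizeGF s = P := by
  classical
  have := Fintype.ofFinite X
  refine ⟨∑ x, Polynomial.X ^ s x, ?_⟩
  ext n
  simp only [sizeGF, PowerSeries.coeff_mk, Polynomial.coeff_coe, Polynomial.finsetSum_coeff,
    Polynomial.coeff_X_pow]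
  rw [Finset.sum_boole, Nat.card_eq_fintype_card, Fintype.card_subtype]
  simp only [eq_comm]

theorem finite_length_fibre (P : SPerm → Prop) (n : ℕ) :
    Finite {x : {p : SPerm // P p} // x.1.1 = n} := by
  refine Finite.of_injective (β := Perm n) (fun x => x.2 ▸ x.1.1.2) ?_
  rintro ⟨⟨⟨m, π⟩, hp⟩, rfl⟩ ⟨⟨⟨m', π'⟩, hp'⟩, h⟩ heq
  dsimp only at h
  subst h
  dsimp only at heq
  subst heq
  rfl

/-- The nonempty permutations of rank `r` type `t` all of whose simple patterns lie in `C`. -/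
abbrev TypeClass (C : ∀ n, Set (Perm n)) (r : ℕ) (t : QType r 0) :=
  {p : SPerm // 1 ≤ p.1 ∧ SimplesIn C p ∧ permType r p = t}

/-- The possible skeletons of canonical decompositions of permutations of length at least two. -/
abbrev Skeleton (C : ∀ n, Set (Perm n)) :=
  {σ : SPerm // (σ.2 ∈ C σ.1 ∧ IsSimple σ.2) ∧ 2 ≤ σ.1}

/-- The skeletons labelled by types that occur in canonical decompositions of permutations of
type `t`. -/
abbrev LabelledSkeleton (C : ∀ n, Set (Perm n)) (r : ℕ) (t : QType r 0) :=
  {c : Σ σ : Skeleton C, Fin σ.1.1 → QType r 0 // ∃ (α : Fin c.1.1.1 → SPerm) (p : SPerm),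
    (∀ i, permType r (α i) = c.2 i) ∧ FirstUnsplit c.1.1 α ∧ IsInflation c.1.1 α p ∧
      permType r p = t}

theorem FirstUnsplit.of_permType_eq {σ : SPerm} {α α' : Fin σ.1 → SPerm} {r : ℕ} (hr : 4 ≤ r)
    (h : ∀ i, permType r (α i) = permType r (α' i)) (hu : FirstUnsplit σ α) :
    FirstUnsplit σ α' := fun i j hij hall hs =>
  hu i j hij hall (splits_of_permType_eq (permType_eq_of_le hr (h i).symm) hs)

theorem sizeGF_typeClass {C : ∀ n, Set (Perm n)} (hC : IsPermClass C) {r : ℕ} (hr : 4 ≤ r)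
    [∀ t, Fintype (LabelledSkeleton C r t)] (t : QType r 0) :
    sizeGF (fun p : TypeClass C r t => p.1.1) =
      sizeGF (fun p : {p : SPerm // p.1 = 1 ∧ permType r p = t} => p.1.1) +
        ∑ γ : LabelledSkeleton C r t, ∏ i, sizeGF (fun p : TypeClass C r (γ.1.2 i) => p.1.1) := by
  have hu : ∀ (γ : LabelledSkeleton C r t) (x : ∀ i, TypeClass C r (γ.1.2 i)),
      FirstUnsplit γ.1.1.1 fun i => (x i).1 := by
    rintro ⟨⟨σ, c⟩, α, p, hα, hu, -, -⟩ x
    exact hu.of_permType_eq hr fun i => (hα i).trans (x i).2.2.2.symm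
  have hinfl : ∀ (γ : LabelledSkeleton C r t) (x : ∀ i, TypeClass C r (γ.1.2 i)),
      ∃ p : TypeClass C r t, IsInflation γ.1.1.1 (fun i => (x i).1) p.1 := by
    rintro ⟨⟨⟨σ, hσ, h2⟩, c⟩, α, p, hα, -, hp, ht⟩ x
    obtain ⟨p', hp'⟩ := exists_isInflation σ fun i => (x i).1
    refine ⟨⟨p', ?_, SimplesIn.of_isInflation hC hσ.1 hp' (fun i => (x i).2.1)
      fun i => (x i).2.2.1, ?_⟩, hp'⟩
    · have := hp'.part_length_lt h2 (fun i => (x i).2.1) ⟨0, by omega⟩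
      omega
    · rw [← ht]
      exact hp'.permType_eq hp fun i => (x i).2.2.2.trans (hα i).symm
  choose F hF using hinfl
  have hlen : ∀ γ x, 2 ≤ (F γ x).1.1 := fun γ x => by
    have h1 := (hF γ x).part_length_lt γ.1.1.2.2 (fun i => (x i).2.1) ⟨0, by have := γ.1.1.2.2; omega⟩
    have h2 := (x ⟨0, by have := γ.1.1.2.2; omega⟩).2.1
    omega
  simp only [← sizeGF_pi (fun i (p : TypeClass C r _) => p.1.1)
    fun i n => finite_length_fibre _ n]
  rw [← sizeGF_sigma (X := fun γ : LabelledSkeleton C r t => ∀ i, TypeClass C r (γ.1.2 i))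
    (fun γ x => ∑ i, (x i).1.1) fun γ n => finite_pi_size _ (fun i n => finite_length_fibre _ n) n]
  rw [← sizeGF_sum]
  · symm
    refine sizeGF_congr (Sum.elim (fun p => ⟨p.1, p.2.1.ge,
      SimplesIn.of_length_le_one C p.2.1.le, p.2.2⟩) fun x => F x.1 x.2) ⟨?_, ?_⟩ ?_
    · rintro (⟨p, hp⟩ | ⟨γ, x⟩) (⟨p', hp'⟩ | ⟨γ', x'⟩) h
      · obtain rfl : p = p' := congrArg Subtype.val h
        rfl
      · have h1 := hlen γ' x'
        have h2 := congrArg (fun p : TypeClass C r t => p.1.1) h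
        simp only [Sum.elim_inl, Sum.elim_inr, hp.1] at h2
        omega
      · have h1 := hlen γ x
        have h2 := congrArg (fun p : TypeClass C r t => p.1.1) h
        simp only [Sum.elim_inl, Sum.elim_inr, hp'.1] at h2
        omega
      · simp only [Sum.elim_inr] at h
        have h1 := hF γ x
        have h2 := hF γ' x'
        rw [h] at h1
        have heq := h1.unique h2 γ.1.1.2.1.2 γ'.1.1.2.1.2 γ.1.1.2.2 γ'.1.1.2.2
          (fun i => (x i).2.1) (fun i => (x' i).2.1) (hu γ x) (hu γ' x')
        clear h1 h2 h
        obtain ⟨⟨⟨σ, hσ⟩, c⟩, hγ⟩ := γ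
        obtain ⟨⟨⟨σ', hσ'⟩, c'⟩, hγ'⟩ := γ'
        obtain ⟨rfl, hx⟩ := Sigma.mk.inj heq
        have hx' : ∀ i, (x i).1 = (x' i).1 := fun i => congrFun (eq_of_heq hx) i
        obtain rfl : c = c' := funext fun i =>
          ((x i).2.2.2.symm.trans (congrArg _ (hx' i))).trans (x' i).2.2.2
        obtain rfl : x = x' := funext fun i => Subtype.ext (hx' i)
        rfl
    · rintro ⟨p, hp1, hpC, hpt⟩
      rcases hp1.eq_or_lt with h1 | h2
      · exact ⟨Sum.inl ⟨p, h1.symm, hpt⟩, rfl⟩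
      · obtain ⟨σ, α, hσ2, hσ, hα, hα1, hαu, hσp, hαp⟩ := exists_canonical p h2
        refine ⟨Sum.inr ⟨⟨⟨⟨σ, ⟨hpC σ hσ2 hσ hσp, hσ⟩, hσ2⟩, fun i => permType r (α i)⟩, α, p,
          fun _ => rfl, hαu, hα, hpt⟩, fun i => ⟨α i, hα1 i, hpC.of_contains (hαp i), rfl⟩⟩, ?_⟩
        exact Subtype.ext ((hF _ _).eq hα)
    · rintro (p | ⟨γ, x⟩)
      · rfl
      · exact (hF γ x).length_eq
  · exact fun n => finite_length_fibre _ n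
  · intro n
    have : ∀ γ : LabelledSkeleton C r t, Finite
        {x : ∀ i, TypeClass C r (γ.1.2 i) // ∑ i, (x i).1.1 = n} :=
      fun γ => finite_pi_size _ (fun i n => finite_length_fibre _ n) n
    refine Finite.of_injective (β := Σ γ : LabelledSkeleton C r t,
      {x : ∀ i, TypeClass C r (γ.1.2 i) // ∑ i, (x i).1.1 = n})
      (fun x => ⟨x.1.1, x.1.2, x.2⟩) ?_
    rintro ⟨⟨γ, x⟩, hx⟩ ⟨⟨γ', x'⟩, hx'⟩ h
    obtain ⟨rfl, h⟩ := Sigma.mk.inj h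
    obtain rfl := congrArg Subtype.val (eq_of_heq h)
    rfl

theorem isAlgebraic_typeClass {C : ∀ n, Set (Perm n)} (hC : IsPermClass C)
    (hfin : FinitelyManySimples C) {r : ℕ} (hr : 4 ≤ r) (t : QType r 0) :
    IsAlgebraic (Polynomial ℚ) (sizeGF fun p : TypeClass C r t => p.1.1) := by
  classical
  have := QType.finite r 0
  have := Fintype.ofFinite (QType r 0)
  have : Finite {σ : SPerm | (σ.2 ∈ C σ.1 ∧ IsSimple σ.2) ∧ 2 ≤ σ.1} :=
    hfin.subset fun σ hσ => hσ.1
  have : Finite (Skeleton C) := this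
  have := fun t => Fintype.ofFinite (LabelledSkeleton C r t)
  have hpoly : ∀ t, ∃ P : Polynomial ℚ,
      sizeGF (fun p : {p : SPerm // p.1 = 1 ∧ permType r p = t} => p.1.1) = P := fun t => by
    have : Finite {p : SPerm // p.1 = 1 ∧ permType r p = t} := by
      have := finite_length_fibre (fun p => p.1 = 1 ∧ permType r p = t) 1
      exact Finite.of_injective
        (fun x => (⟨x, x.2.1⟩ : {x : {p : SPerm // p.1 = 1 ∧ permType r p = t} // x.1.1 = 1}))
        fun x y h => congrArg Subtype.val h
    exact exists_sizeGF_eq_coe _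
  choose P hP using hpoly
  refine powerSeries_isAlgebraic_of_system (Γ := LabelledSkeleton C r)
    (m := fun t γ => γ.1.1.1.1) (fun t γ => γ.1.1.2.2) (fun t γ => γ.1.2) P
    (fun t => sizeGF fun p : TypeClass C r t => p.1.1) (fun t => ?_) (fun t => ?_) t
  · rw [← PowerSeries.coeff_zero_eq_constantCoeff_apply, sizeGF, PowerSeries.coeff_mk]
    have : IsEmpty {x : TypeClass C r t // x.1.1 = 0} := ⟨fun x => by
      have := x.1.2.1
      have := x.2
      omega⟩
    simp
  · rw [← hP]
    exact sizeGF_typeClass hC hr t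

theorem genFun_eq_sizeGF (S : ∀ n, Set (Perm n)) :
    genFun S = sizeGF fun p : {p : SPerm // 1 ≤ p.1 ∧ p.2 ∈ S p.1} => p.1.1 := by
  ext n
  simp only [genFun, sizeGF, PowerSeries.coeff_mk]
  split_ifs with hn
  · have : IsEmpty {x : {p : SPerm // 1 ≤ p.1 ∧ p.2 ∈ S p.1} // x.1.1 = n} := ⟨fun x => by
      have := x.1.2.1
      have := x.2
      omega⟩
    simp
  · congr 1
    refine Nat.card_congr (Equiv.ofBijective
      (fun π => ⟨⟨⟨n, π.1⟩, Nat.one_le_iff_ne_zero.2 hn, π.2⟩, rfl⟩) ⟨fun π π' h => ?_, ?_⟩)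
    · simpa [Subtype.ext_iff] using h
    · rintro ⟨⟨⟨m, π⟩, h1, h2⟩, rfl⟩
      exact ⟨⟨π, h2⟩, rfl⟩

theorem isAlgebraicOverQx_genFun {C : ∀ n, Set (Perm n)} (hC : IsPermClass C)
    (hfin : FinitelyManySimples C) {r : ℕ} (hr : 4 ≤ r) (S : ∀ n, Set (Perm n))
    (hSC : ∀ p : SPerm, p.2 ∈ S p.1 → SimplesIn C p)
    (hS : ∀ p p' : SPerm, SimplesIn C p → SimplesIn C p' → permType r p = permType r p' →
      p.2 ∈ S p.1 → p'.2 ∈ S p'.1) : IsAlgebraicOverQx (genFun S) := by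
  classical
  have := QType.finite r 0
  let G := {t : QType r 0 // ∃ p : SPerm, SimplesIn C p ∧ p.2 ∈ S p.1 ∧ permType r p = t}
  have := Fintype.ofFinite G
  have heq : genFun S = ∑ t : G, sizeGF fun p : TypeClass C r t.1 => p.1.1 := by
    rw [genFun_eq_sizeGF, ← sizeGF_sigma (X := fun t : G => TypeClass C r t.1)
      (fun t p => p.1.1) fun t n => finite_length_fibre _ n]
    refine sizeGF_congr (fun p => ⟨⟨permType r p.1, p.1, hSC _ p.2.2, p.2.2, rfl⟩,
      p.1, p.2.1, hSC _ p.2.2, rfl⟩) ⟨fun p p' h => ?_, ?_⟩ fun _ => rfl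
    · exact Subtype.ext (congrArg (fun x : Σ t : G, TypeClass C r t.1 => x.2.1) h)
    · rintro ⟨⟨t, hG⟩, p', h1, hp'C, ht⟩
      dsimp only at ht
      subst ht
      obtain ⟨p, hpC, hpS, ht⟩ := hG
      exact ⟨⟨p', h1, hS p p' hpC hp'C ht hpS⟩, rfl⟩
  have halg : IsAlgebraic (Polynomial ℚ) (genFun S) := by
    rw [heq]
    exact Finset.sum_induction _ _ (fun _ _ => IsAlgebraic.add) isAlgebraic_zero
      fun t _ => isAlgebraic_typeClass hC hfin hr t.1
  obtain ⟨P, hP0, hP⟩ := halg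
  exact ⟨P, hP0, hP⟩

/-- If `C` is a permutation class containing only finitely many simple permutations,
then for any finite set `B₁` of blocked permutations and any finite set `B₂` of barred
permutations, the generating function of the set of permutations in `C` avoiding every
element of `B₁` and every element of `B₂` is algebraic over `ℚ[x]`. -/
theorem statement4 (C : ∀ n, Set (Perm n)) (hC : IsPermClass C)
    (hfin : FinitelyManySimples C)
    (B₁ : Set (Σ k : ℕ, Perm k × Set ℕ)) (hB₁ : B₁.Finite)
    (hB₁D : ∀ b ∈ B₁, ∀ s ∈ b.2.2, 1 ≤ s ∧ s + 1 ≤ b.1)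
    (B₂ : Set (Σ k : ℕ, Perm k × Set (Fin k))) (hB₂ : B₂.Finite) :
    IsAlgebraicOverQx (genFun fun n =>
      {π : Perm n | π ∈ C n ∧ (∀ b ∈ B₁, ¬ ContainsBlocked π b.2.1 b.2.2) ∧
        ∀ b ∈ B₂, AvoidsBarred π b.2.1 b.2.2}) := by
  obtain ⟨B, hB, hBC⟩ := exists_finite_basis hC hfin
  obtain ⟨r0, h0⟩ := (hB.image Sigma.fst).bddAbove
  obtain ⟨r1, h1⟩ := (hB₁.image Sigma.fst).bddAbove
  obtain ⟨r2, h2⟩ := (hB₂.image Sigma.fst).bddAbove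
  refine isAlgebraicOverQx_genFun hC hfin (r := 4 + r0 + (r1 + 1) + (r2 + r2)) (by omega) _
    (fun p hp τ _ _ hτ => hC _ _ hp.1 hτ) fun p p' hp hp' h hS => ?_
  refine ⟨(hBC p' hp').2 fun β hβ hc => ?_, fun b hb hc => hS.2.1 b hb ?_,
    fun b hb => ?_⟩
  · have := h0 (Set.mem_image_of_mem _ hβ)
    exact (hBC p hp).1 hS.1 β hβ
      (contains_of_permType_eq β.2 (permType_eq_of_le (by omega) h.symm) hc)
  · have := h1 (Set.mem_image_of_mem _ hb)
    exact containsBlocked_of_permType_eq _ _ (permType_eq_of_le (by omega) h.symm) hc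
  · have := h2 (Set.mem_image_of_mem _ hb)
    exact avoidsBarred_of_permType_eq _ _ (permType_eq_of_le (by omega) h) (hS.2.2 b hb)
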